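/- Suppose the family {ρ_{x,s}} satisfies Assumption A. Then for every ε ∈ (0,1) and every probability distribution P on 𝒳, the limit lim_{n→∞} −(1/n)·log₂ β_n(ε) exists and equals inf_Q I[X;B]_{P,Q}, where the infimum is over all finitely supported probability distributions Q on 𝒮. -/

import Mathlib

open Filter
open scoped ComplexOrder

noncomputable section

/-- A density matrix: positive semidefinite with unit trace. -/
def IsDensity {m : Type*} [Fintype m] (ρ : Matrix m m ℂ) : Prop :=
  ρ.PosSemidef ∧ ρ.trace = 1

/-- Loewner order `A ⪯ B`. -/
def Loewner {m : Type*} [Fintype m] (A B : Matrix m m ℂ) : Prop :=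
  (B - A).PosSemidef

/-- Functional calculus for Hermitian matrices (junk value `0` on non-Hermitian input). -/
def matFun {m : Type*} [Fintype m] [DecidableEq m] (f : ℝ → ℝ) (A : Matrix m m ℂ) :
    Matrix m m ℂ :=
  if hA : A.IsHermitian then
    (hA.eigenvectorUnitary : Matrix m m ℂ) *
        Matrix.diagonal (fun i => (f (hA.eigenvalues i) : ℂ)) *
      star (hA.eigenvectorUnitary : Matrix m m ℂ)
  else 0

/-- Base-2 matrix logarithm, taken on the support. -/
def mlog2 {m : Type*} [Fintype m] [DecidableEq m] (A : Matrix m m ℂ) : Matrix m m ℂ :=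
  matFun (fun u => if u ≤ 0 then 0 else Real.logb 2 u) A

/-- Quantum relative entropy `D(ρ‖σ) = Tr[ρ(log₂ρ − log₂σ)]` (logarithms on supports). -/
def relEnt {m : Type*} [Fintype m] [DecidableEq m] (ρ σ : Matrix m m ℂ) : ℝ :=
  (Matrix.trace (ρ * (mlog2 ρ - mlog2 σ))).re

/-- The classical–quantum state `Σ_x w(x) |x⟩⟨x| ⊗ ρ_x`. -/
def cqState {X B : Type*} [DecidableEq X] (w : X → ℝ) (ρ : X → Matrix B B ℂ) :
    Matrix (X × B) (X × B) ℂ :=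
  Matrix.of fun p q => (if p.1 = q.1 then ((w p.1 : ℝ) : ℂ) else 0) * ρ p.1 p.2 q.2

/-- Tensor product of a finite family of matrices, realized on functions. -/
def tensorFam {k d : Type*} [Fintype k] (ρ : k → Matrix d d ℂ) :
    Matrix (k → d) (k → d) ℂ :=
  Matrix.of fun i j => ∏ a, ρ a (i a) (j a)

/-- Finitely supported probability distributions on `𝒮`. -/
abbrev FinProb (𝒮 : Type*) : Type _ :=
  {Q : 𝒮 →₀ ℝ // (∀ s, 0 ≤ Q s) ∧ Q.sum (fun _ a => a) = 1}

/-- Assumption A. -/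
def AssumptionA {𝒳 𝒮 : Type*} {d : ℕ} (ρ : 𝒳 → 𝒮 → Matrix (Fin d) (Fin d) ℂ) : Prop :=
  ∀ ε : ℝ, 0 < ε → ∃ Sε : Finset 𝒮, ∀ s : 𝒮, ∃ s' ∈ Sε, ∀ x : 𝒳,
    Loewner (ρ x s) ((1 + ε) • ρ x s')

/-- The mutual information `I[X;B]_{P,Q}`. -/
def mutInfI {𝒳 𝒮 : Type*} [Fintype 𝒳] [DecidableEq 𝒳] {d : ℕ}
    (ρ : 𝒳 → 𝒮 → Matrix (Fin d) (Fin d) ℂ) (P : 𝒳 → ℝ) (Q : 𝒮 →₀ ℝ) : ℝ :=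
  relEnt (cqState P (fun x => Q.sum fun s w => w • ρ x s))
    (cqState P (fun _ => ∑ x, P x • (Q.sum fun s w => w • ρ x s)))

/-- The optimal type-II error `β_n(ε)` of the universal independence test. -/
def betaN {𝒳 𝒮 : Type*} [Fintype 𝒳] [DecidableEq 𝒳] {d : ℕ}
    (ρ : 𝒳 → 𝒮 → Matrix (Fin d) (Fin d) ℂ) (P : 𝒳 → ℝ) (ε : ℝ) (n : ℕ) : ℝ :=
  sInf { v : ℝ |
    ∃ T : Matrix ((Fin n → 𝒳) × (Fin n → Fin d)) ((Fin n → 𝒳) × (Fin n → Fin d)) ℂ,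
      T.PosSemidef ∧ (1 - T).PosSemidef ∧
      (∀ sv : Fin n → 𝒮,
        (Matrix.trace ((1 - T) *
          cqState (fun xv : Fin n → 𝒳 => ∏ k, P (xv k))
            (fun xv => tensorFam fun k => ρ (xv k) (sv k)))).re ≤ ε) ∧
      v = ⨆ σ : {σ : Matrix (Fin n → Fin d) (Fin n → Fin d) ℂ // IsDensity σ},
        (Matrix.trace (T * cqState (fun xv : Fin n → 𝒳 => ∏ k, P (xv k)) (fun _ => σ.1))).re }

/-!
Everything rests on the i.i.d. case: for a fixed `Q`, the spectral projections of `ρ_{Q,x^n}` and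
of the average state onto their typical eigenvalues form a test whose type I error decays
exponentially and whose type II error is at most `exp(-n (I - 2δ))` for every `σ`; conversely, the
same typicality shows that no test with type I error bounded away from `1` does better against
`σ = (Σ_x P(x) ρ_{Q,x})^{⊗n}`.

*Converse.* A test that works for all `s^n` works for their average `ρ_Q^{⊗n}`, for each `Q`.

*Achievability.* By Assumption A the states in `𝒮` may be replaced by finitely many at the cost of a
factor `(1 + κ)^n`. Averaging a test over permutations replaces `s^n` by a random rearrangement of
itself, and its distribution is at most a polynomial multiple of the i.i.d. distribution given by
the type of `s^n`. Hence it suffices to work with `ρ_Q^{⊗n}` for the polynomially many types `Q`.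
The tests `F_Q` for these are merged into one: the operator monotone function `a ↦ 1 - (1 + a)⁻¹`,
applied to `c⁻¹ Σ_Q F_Q`, gives a test `T ≤ c⁻¹ Σ_Q F_Q` with `1 - T ≤ (1 - F_Q) + c` for each `Q`.
-/

section Chernoff

lemma exp_le_one_add_add_sq_mul_exp_abs (u : ℝ) :
    Real.exp u ≤ 1 + u + u ^ 2 * Real.exp |u| := by
  have taylor := Complex.norm_exp_sub_sum_le_norm_mul_exp (u : ℂ) 2
  have remainder : Complex.exp u - ∑ k ∈ Finset.range 2, (u : ℂ) ^ k / (k.factorial : ℂ) =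
      ((Real.exp u - 1 - u : ℝ) : ℂ) := by
    push_cast [Finset.sum_range_succ]
    simp only [Finset.range_zero, Finset.sum_empty, pow_zero, pow_one, Nat.factorial]
    ring
  rw [remainder, Complex.norm_real, Complex.norm_real, Real.norm_eq_abs, Real.norm_eq_abs,
    sq_abs] at taylor
  linarith [le_abs_self (Real.exp u - 1 - u)]

variable {α : Type*} {p u L : α → ℝ} {K δ : ℝ}

/-- The weight of `x` under the `n`-fold product of the weight function `P`. -/
abbrev iidProb (P : α → ℝ) (n : ℕ) (x : Fin n → α) : ℝ := ∏ k, P (x k)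

lemma log_iidProb {n : ℕ} {v : Fin n → α} (h : iidProb u n v ≠ 0) :
    Real.log (iidProb u n v) = ∑ k, Real.log (u (v k)) :=
  Real.log_prod fun k _ => Finset.prod_ne_zero_iff.mp h k (Finset.mem_univ k)

lemma iidProb_ne_zero_of_imp (h : ∀ a, p a ≠ 0 → u a ≠ 0) {n : ℕ} {v : Fin n → α}
    (hv : iidProb p n v ≠ 0) : iidProb u n v ≠ 0 :=
  Finset.prod_ne_zero_iff.mpr fun k hk => h _ (Finset.prod_ne_zero_iff.mp hv k hk)

variable [Fintype α]

lemma sum_mul_exp_le_exp (hp : p ∈ stdSimplex ℝ α)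
    (hK : ∑ a, p a * (L a ^ 2 * Real.exp (|L a| / 2)) ≤ K)
    {t : ℝ} (ht₀ : 0 ≤ t) (ht : t ≤ 1 / 2) :
    ∑ a, p a * Real.exp (t * L a) ≤ Real.exp (t * (∑ a, p a * L a) + t ^ 2 * K) := by
  have pointwise : ∀ a, Real.exp (t * L a) ≤
      1 + t * L a + t ^ 2 * (L a ^ 2 * Real.exp (|L a| / 2)) := by
    intro a
    have abs_le : |t * L a| ≤ |L a| / 2 := by
      rw [abs_mul, abs_of_nonneg ht₀]
      nlinarith [abs_nonneg (L a)]
    calc Real.exp (t * L a) ≤ 1 + t * L a + (t * L a) ^ 2 * Real.exp |t * L a| :=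
          exp_le_one_add_add_sq_mul_exp_abs _
      _ ≤ 1 + t * L a + (t * L a) ^ 2 * Real.exp (|L a| / 2) := by gcongr
      _ = _ := by ring
  calc ∑ a, p a * Real.exp (t * L a)
      ≤ ∑ a, p a * (1 + t * L a + t ^ 2 * (L a ^ 2 * Real.exp (|L a| / 2))) :=
        Finset.sum_le_sum fun a _ => mul_le_mul_of_nonneg_left (pointwise a) (hp.1 a)
    _ = (t * ∑ a, p a * L a) + t ^ 2 * ∑ a, p a * (L a ^ 2 * Real.exp (|L a| / 2)) + 1 := by
        nth_rw 2 [← hp.2]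
        rw [Finset.mul_sum, Finset.mul_sum, ← Finset.sum_add_distrib, ← Finset.sum_add_distrib]
        exact Finset.sum_congr rfl fun a _ => by ring
    _ ≤ t * (∑ a, p a * L a) + t ^ 2 * K + 1 := by gcongr
    _ ≤ _ := Real.add_one_le_exp _

lemma iidProb_mem_stdSimplex {P : α → ℝ} (hP : P ∈ stdSimplex ℝ α) (n : ℕ) :
    iidProb P n ∈ stdSimplex ℝ (Fin n → α) :=
  ⟨fun _ => Finset.prod_nonneg fun _ _ => hP.1 _, by rw [← Fintype.sum_pow, hP.2, one_pow]⟩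

lemma sum_iidProb_le_exp_mul_pow (hp : ∀ a, 0 ≤ p a) {t : ℝ} (ht : 0 ≤ t) {n : ℕ} {c : ℝ}
    (S : Finset (Fin n → α)) (hS : ∀ v ∈ S, iidProb p n v ≠ 0 → c ≤ ∑ k, L (v k)) :
    ∑ v ∈ S, iidProb p n v ≤ Real.exp (-(t * c)) * (∑ a, p a * Real.exp (t * L a)) ^ n := by
  have tilt_nonneg : ∀ v : Fin n → α, 0 ≤ ∏ k, p (v k) * Real.exp (t * L (v k)) := fun v =>
    Finset.prod_nonneg fun k _ => mul_nonneg (hp _) (Real.exp_nonneg _)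
  have markov : ∀ v ∈ S, iidProb p n v ≤
      Real.exp (-(t * c)) * ∏ k, p (v k) * Real.exp (t * L (v k)) := by
    intro v hv
    rcases eq_or_ne (iidProb p n v) 0 with h0 | h0
    · rw [h0]
      exact mul_nonneg (Real.exp_nonneg _) (tilt_nonneg v)
    · rw [Finset.prod_mul_distrib, ← Real.exp_sum, ← Finset.mul_sum, mul_left_comm, ← Real.exp_add]
      refine le_mul_of_one_le_right (Finset.prod_nonneg fun k _ => hp _) (Real.one_le_exp ?_)
      linarith [mul_le_mul_of_nonneg_left (hS v hv h0) ht]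
  calc ∑ v ∈ S, iidProb p n v
      ≤ ∑ v ∈ S, Real.exp (-(t * c)) * ∏ k, p (v k) * Real.exp (t * L (v k)) :=
        Finset.sum_le_sum markov
    _ ≤ ∑ v : Fin n → α, Real.exp (-(t * c)) * ∏ k, p (v k) * Real.exp (t * L (v k)) :=
        Finset.sum_le_univ_sum_of_nonneg fun v => mul_nonneg (Real.exp_nonneg _) (tilt_nonneg v)
    _ = _ := by rw [← Finset.mul_sum, Fintype.sum_pow]

lemma sum_iidProb_le_exp (hp : p ∈ stdSimplex ℝ α)
    (hK : ∑ a, p a * (L a ^ 2 * Real.exp (|L a| / 2)) ≤ K) (hδ : 0 < δ) (hδK : δ ≤ K)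
    {n : ℕ} (S : Finset (Fin n → α))
    (hS : ∀ v ∈ S, iidProb p n v ≠ 0 → n * ((∑ a, p a * L a) + δ) ≤ ∑ k, L (v k)) :
    ∑ v ∈ S, iidProb p n v ≤ Real.exp (-(n * (δ ^ 2 / (4 * K)))) := by
  have hK₀ : 0 < K := hδ.trans_le hδK
  generalize hm : ∑ a, p a * L a = m at hS
  -- The tilt `δ / (2 K)` minimises the exponent `t² K - t δ`.
  obtain ⟨t, ht⟩ : ∃ t, t = δ / (2 * K) := ⟨_, rfl⟩
  have ht₀ : 0 ≤ t := by rw [ht]; positivity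
  have ht₁ : t ≤ 1 / 2 := by
    rw [ht, div_le_div_iff₀ (by positivity) (by norm_num)]
    linarith
  calc ∑ v ∈ S, iidProb p n v
      ≤ Real.exp (-(t * (n * (m + δ)))) * (∑ a, p a * Real.exp (t * L a)) ^ n :=
        sum_iidProb_le_exp_mul_pow hp.1 ht₀ S hS
    _ ≤ Real.exp (-(t * (n * (m + δ)))) * Real.exp (t * m + t ^ 2 * K) ^ n := by
        gcongr
        · exact Finset.sum_nonneg fun a _ => mul_nonneg (hp.1 a) (Real.exp_nonneg _)
        · exact hm ▸ sum_mul_exp_le_exp hp hK ht₀ ht₁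
    _ = Real.exp (-(n * (t * δ - t ^ 2 * K))) := by
        rw [← Real.exp_nat_mul, ← Real.exp_add]
        ring_nf
    _ = _ := by
        rw [ht]
        congr 3
        field_simp
        ring

lemma sum_iidProb_filter_exp_lt (hp : p ∈ stdSimplex ℝ α) (hpu : ∀ a, p a ≠ 0 → u a ≠ 0)
    (hK : ∑ a, p a * (Real.log (u a) ^ 2 * Real.exp (|Real.log (u a)| / 2)) ≤ K)
    (hδ : 0 < δ) (hδK : δ ≤ K) (n : ℕ) :
    ∑ v with Real.exp (n * (∑ a, p a * Real.log (u a) + δ)) < iidProb u n v, iidProb p n v ≤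
      Real.exp (-(n * (δ ^ 2 / (4 * K)))) := by
  refine sum_iidProb_le_exp hp hK hδ hδK _ fun v hv hv₀ => ?_
  rw [Finset.mem_filter_univ] at hv
  rw [← log_iidProb (iidProb_ne_zero_of_imp hpu hv₀)]
  exact (Real.le_log_iff_exp_le ((Real.exp_pos _).trans hv)).mpr hv.le

lemma sum_iidProb_filter_lt_exp (hp : p ∈ stdSimplex ℝ α) (hu : ∀ a, 0 ≤ u a)
    (hpu : ∀ a, p a ≠ 0 → u a ≠ 0)
    (hK : ∑ a, p a * (Real.log (u a) ^ 2 * Real.exp (|Real.log (u a)| / 2)) ≤ K)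
    (hδ : 0 < δ) (hδK : δ ≤ K) (n : ℕ) :
    ∑ v with iidProb u n v < Real.exp (n * (∑ a, p a * Real.log (u a) - δ)), iidProb p n v ≤
      Real.exp (-(n * (δ ^ 2 / (4 * K)))) := by
  refine sum_iidProb_le_exp (L := fun a => -Real.log (u a)) hp
    (by simpa only [neg_sq, abs_neg] using hK) hδ hδK _ fun v hv hv₀ => ?_
  rw [Finset.mem_filter_univ] at hv
  have hu₀ := iidProb_ne_zero_of_imp hpu hv₀
  have hpos : 0 < iidProb u n v := (Finset.prod_nonneg fun k _ => hu (v k)).lt_of_ne' hu₀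
  have hlog := (Real.log_le_iff_le_exp hpos).mpr hv.le
  rw [log_iidProb hu₀] at hlog
  simp only [mul_neg, Finset.sum_neg_distrib]
  linarith

lemma mul_log_sq_mul_exp_le {r : ℝ} (h₀ : 0 ≤ r) (h₁ : r ≤ 1) :
    r * (Real.log r ^ 2 * Real.exp (|Real.log r| / 2)) ≤ 16 := by
  rcases h₀.eq_or_lt with h | h
  · simp [← h]
  obtain ⟨u, rfl⟩ : ∃ u, r = Real.exp (-u) := ⟨-Real.log r, by rw [neg_neg, Real.exp_log h]⟩
  have hu : 0 ≤ u := by simpa using h₁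
  have hsq : u ^ 2 ≤ 16 * Real.exp (u / 2) :=
    calc u ^ 2 ≤ (4 * Real.exp (u / 4)) ^ 2 :=
          pow_le_pow_left₀ hu (by linarith [Real.add_one_le_exp (u / 4)]) 2
      _ = 16 * Real.exp (u / 2) := by
          rw [mul_pow, ← Real.exp_nat_mul]
          norm_num
          ring_nf
  rw [Real.log_exp, abs_neg, abs_of_nonneg hu, neg_sq]
  calc Real.exp (-u) * (u ^ 2 * Real.exp (u / 2))
      ≤ Real.exp (-u) * (16 * Real.exp (u / 2) * Real.exp (u / 2)) := by gcongr
    _ = 16 * Real.exp (-u + u / 2 + u / 2) := by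
        rw [Real.exp_add, Real.exp_add]
        ring
    _ = 16 := by
        ring_nf
        simp

end Chernoff

section StarOrderedRing

variable {A : Type*} [Ring A] [StarRing A] [PartialOrder A] [StarOrderedRing A] {p t : A}

lemma one_sub_conj_le (hp : IsStarProjection p) (ht : t ∈ Set.Icc 0 1) :
    1 - p * t * p ≤ 3 • (1 - p) + 2 • (1 - t) := by
  have h₁ : 0 ≤ (1 + (1 - p)) * (1 - t) * (1 + (1 - p)) :=
    (IsSelfAdjoint.one A |>.add hp.one_sub.isSelfAdjoint).conjugate_nonneg (sub_nonneg.mpr ht.2)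
  have h₂ : 0 ≤ (1 - p) * t * (1 - p) := hp.one_sub.isSelfAdjoint.conjugate_nonneg ht.1
  have key : 3 • (1 - p) + 2 • (1 - t) - (1 - p * t * p) =
      (1 + (1 - p)) * (1 - t) * (1 + (1 - p)) + 2 • ((1 - p) * t * (1 - p)) + (p - p * p) := by
    noncomm_ring
  rw [← sub_nonneg, key, hp.isIdempotentElem.eq, sub_self, add_zero]
  exact add_nonneg h₁ (nsmul_nonneg h₂ 2)

lemma le_two_nsmul_conj_add (hp : IsStarProjection p) (ht : t ∈ Set.Icc 0 1) :
    t ≤ 2 • (p * t * p) + 2 • (1 - p) := by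
  have h₁ : 0 ≤ (p - (1 - p)) * t * (p - (1 - p)) :=
    (hp.isSelfAdjoint.sub hp.one_sub.isSelfAdjoint).conjugate_nonneg ht.1
  have h₂ : 0 ≤ (1 - p) * (1 - t) * (1 - p) :=
    hp.one_sub.isSelfAdjoint.conjugate_nonneg (sub_nonneg.mpr ht.2)
  have key : 2 • (p * t * p) + 2 • (1 - p) - t =
      (p - (1 - p)) * t * (p - (1 - p)) + 2 • ((1 - p) * (1 - t) * (1 - p)) + 2 • (p - p * p) := by
    noncomm_ring
  rw [← sub_nonneg, key, hp.isIdempotentElem.eq, sub_self, smul_zero, add_zero]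
  exact add_nonneg h₁ (nsmul_nonneg h₂ 2)

end StarOrderedRing

section CStarAlgebra

variable {A : Type*} [CStarAlgebra A] [PartialOrder A] [StarOrderedRing A] {a b : A}

/-- The operator monotone transform `1 - (1 + a)⁻¹` of a positive element `a`. Its values are
effects, so it turns a positive combination of tests into a single test. -/
def oneSubInvOneAdd (a : A) : A := cfc (fun x : ℝ => 1 - (1 + x)⁻¹) a

lemma continuousOn_one_sub_inv_one_add :
    ContinuousOn (fun x : ℝ => 1 - (1 + x)⁻¹) (Set.Ici 0) :=
  continuousOn_const.sub <| ContinuousOn.inv₀ (by fun_prop) fun x (hx : 0 ≤ x) => by positivity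

lemma oneSubInvOneAdd_mono (ha : 0 ≤ a) (hab : a ≤ b) :
    oneSubInvOneAdd a ≤ oneSubInvOneAdd b := by
  have cfcₙ_eq : ∀ d : A, 0 ≤ d → cfcₙ (fun x : ℝ => 1 - (1 + x)⁻¹) d = oneSubInvOneAdd d :=
    fun d hd => cfcₙ_eq_cfc (continuousOn_one_sub_inv_one_add.mono fun x hx =>
      quasispectrum_nonneg_of_nonneg d hd x hx)
  have hb := ha.trans hab
  rw [← cfcₙ_eq a ha, ← cfcₙ_eq b hb]
  exact CFC.monotoneOn_one_sub_one_add_inv_real ha hb hab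

lemma oneSubInvOneAdd_mem_Icc (ha : 0 ≤ a) : oneSubInvOneAdd a ∈ Set.Icc 0 1 := by
  have bounds : ∀ x ∈ spectrum ℝ a, 0 < (1 + x)⁻¹ ∧ (1 + x)⁻¹ ≤ 1 := fun x hx => by
    have := spectrum_nonneg_of_nonneg ha hx
    exact ⟨by positivity, inv_le_one_of_one_le₀ (by linarith)⟩
  exact ⟨cfc_nonneg fun x hx => sub_nonneg.mpr (bounds x hx).2,
    cfc_le_one _ _ fun x hx => (sub_lt_self _ (bounds x hx).1).le⟩

lemma oneSubInvOneAdd_le (ha : 0 ≤ a) : oneSubInvOneAdd a ≤ a := by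
  conv_rhs => rw [← cfc_id ℝ a]
  refine cfc_mono (fun x hx => ?_)
    (continuousOn_one_sub_inv_one_add.mono fun x hx => spectrum_nonneg_of_nonneg ha hx)
  have hx := spectrum_nonneg_of_nonneg ha hx
  rw [id, sub_le_iff_le_add, ← sub_le_iff_le_add', ← one_div, le_div_iff₀ (by positivity)]
  nlinarith

lemma smul_sub_le_oneSubInvOneAdd (ha : 0 ≤ a) {c : ℝ} (hc : 0 < c) (hca : c • a ≤ 1) :
    c • a - c • 1 ≤ oneSubInvOneAdd a := by
  have hac : a ≤ algebraMap ℝ A c⁻¹ := by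
    rwa [Algebra.algebraMap_eq_smul_one, le_inv_smul_iff_of_pos hc]
  have lhs_eq : c • a - c • 1 = cfc (fun x : ℝ => c * x - c) a := by
    rw [cfc_sub .., cfc_const_mul .., cfc_const .., cfc_id' .., Algebra.algebraMap_eq_smul_one]
  rw [lhs_eq]
  refine cfc_mono (fun x hx => ?_) (by fun_prop)
    (continuousOn_one_sub_inv_one_add.mono fun x hx => spectrum_nonneg_of_nonneg ha hx)
  have hx₀ := spectrum_nonneg_of_nonneg ha hx
  have hx₁ : c * x ≤ 1 :=
    (le_inv_mul_iff₀ hc).mp (by simpa using (le_algebraMap_iff_spectrum_le).mp hac x hx)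
  rw [le_sub_comm, ← one_div, div_le_iff₀ (by positivity)]
  nlinarith

lemma exists_test_of_forall_mem_Icc {ι : Type*} [Fintype ι] {F : ι → A}
    (hF : ∀ q, F q ∈ Set.Icc 0 1) {c : ℝ} (hc : 0 < c) :
    ∃ T ∈ Set.Icc (0 : A) 1, (∀ q, 1 - T ≤ (1 - F q) + c • 1) ∧ T ≤ c⁻¹ • ∑ q, F q := by
  have hS : 0 ≤ c⁻¹ • ∑ q, F q :=
    smul_nonneg (inv_nonneg.mpr hc.le) (Finset.sum_nonneg fun q _ => (hF q).1)
  refine ⟨oneSubInvOneAdd (c⁻¹ • ∑ q, F q), oneSubInvOneAdd_mem_Icc hS, fun q => ?_,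
    oneSubInvOneAdd_le hS⟩
  have hFq : 0 ≤ c⁻¹ • F q := smul_nonneg (inv_nonneg.mpr hc.le) (hF q).1
  have single_le : c⁻¹ • F q ≤ c⁻¹ • ∑ q, F q :=
    smul_le_smul_of_nonneg_left (Finset.single_le_sum (fun q _ => (hF q).1) (Finset.mem_univ q))
      (inv_nonneg.mpr hc.le)
  have lower : F q - c • 1 ≤ oneSubInvOneAdd (c⁻¹ • F q) := by
    have := smul_sub_le_oneSubInvOneAdd hFq hc (by simpa [hc.ne'] using (hF q).2)
    rwa [smul_inv_smul₀ hc.ne'] at this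
  calc 1 - oneSubInvOneAdd (c⁻¹ • ∑ q, F q) ≤ 1 - (F q - c • 1) :=
        sub_le_sub_left (lower.trans (oneSubInvOneAdd_mono hFq single_le)) 1
    _ = (1 - F q) + c • 1 := by abel

end CStarAlgebra

section Spectral

open scoped MatrixOrder Matrix
open Matrix Polynomial

variable {m : Type*} [Fintype m]

/-- The real part of the trace, as a real-linear functional. -/
def reTrace : Matrix m m ℂ →ₗ[ℝ] ℝ := Complex.reLm ∘ₗ (traceLinearMap m ℝ ℂ)

lemma reTrace_apply (A : Matrix m m ℂ) : reTrace A = A.trace.re := rfl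

lemma reTrace_mul_comm {n : Type*} [Fintype n] (A : Matrix m n ℂ) (B : Matrix n m ℂ) :
    reTrace (A * B) = reTrace (B * A) := by
  rw [reTrace_apply, trace_mul_comm, reTrace_apply]

lemma reTrace_nonneg {A : Matrix m m ℂ} (hA : 0 ≤ A) : 0 ≤ reTrace A :=
  (Complex.le_def.mp (nonneg_iff_posSemidef.mp hA).trace_nonneg).1

variable {A B C : Matrix m m ℂ}

lemma reTrace_mul_nonneg (hA : 0 ≤ A) (hB : 0 ≤ B) : 0 ≤ reTrace (A * B) := by
  classical
  obtain ⟨C, rfl⟩ := CStarAlgebra.nonneg_iff_eq_star_mul_self.mp hB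
  rw [← mul_assoc, reTrace_mul_comm, ← mul_assoc]
  exact reTrace_nonneg (star_right_conjugate_nonneg hA C)

lemma reTrace_mul_le_mul_right (hAB : A ≤ B) (hC : 0 ≤ C) : reTrace (A * C) ≤ reTrace (B * C) := by
  rw [← sub_nonneg, ← map_sub, ← sub_mul]
  exact reTrace_mul_nonneg (sub_nonneg.mpr hAB) hC

lemma reTrace_mul_le_mul_left (hC : 0 ≤ C) (hAB : A ≤ B) : reTrace (C * A) ≤ reTrace (C * B) := by
  rw [reTrace_mul_comm C, reTrace_mul_comm C]
  exact reTrace_mul_le_mul_right hAB hC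

lemma sum_mul_reTrace_mul {X : Type*} [Fintype X] (w : X → ℝ) (R : X → Matrix m m ℂ)
    (M : Matrix m m ℂ) :
    ∑ x, w x * reTrace (M * R x) = reTrace (M * ∑ x, w x • R x) := by
  simp only [Finset.mul_sum, map_sum, mul_smul_comm, map_smul, smul_eq_mul]

variable [DecidableEq m]

/-- The embedding `a ↦ U diag(a) U*` of real functions as the matrices diagonal in the
orthonormal basis given by the columns of `U`. -/
def conjDiagonal (U : unitaryGroup m ℂ) : (m → ℝ) →⋆ₐ[ℝ] Matrix m m ℂ :=
  ((Unitary.conjStarAlgAut ℝ (Matrix m m ℂ) U : Matrix m m ℂ ≃⋆ₐ[ℝ] Matrix m m ℂ) :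
      Matrix m m ℂ →⋆ₐ[ℝ] Matrix m m ℂ).comp
    { toFun a := diagonal fun i => (a i : ℂ)
      map_one' := by simp
      map_mul' := by simp
      map_zero' := by simp
      map_add' := by simp
      commutes' r := by
        ext i j
        simp [algebraMap_matrix_apply, diagonal_apply]
      map_star' a := by simp [star_eq_conjTranspose, diagonal_conjTranspose, Pi.star_def] }

lemma conjDiagonal_apply (U : unitaryGroup m ℂ) (a : m → ℝ) :
    conjDiagonal U a =
      (U : Matrix m m ℂ) * diagonal (fun i => (a i : ℂ)) * star (U : Matrix m m ℂ) :=
  rfl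

lemma isSelfAdjoint_conjDiagonal (U : unitaryGroup m ℂ) (a : m → ℝ) :
    IsSelfAdjoint (conjDiagonal U a) :=
  (IsSelfAdjoint.all a).map (conjDiagonal U)

lemma isStarProjection_conjDiagonal_indicator (U : unitaryGroup m ℂ) (S : Set m) :
    IsStarProjection (conjDiagonal U (S.indicator 1)) :=
  ⟨.map (by ext i; by_cases hi : i ∈ S <;> simp [hi]) _, isSelfAdjoint_conjDiagonal _ _⟩

lemma reTrace_conjDiagonal (U : unitaryGroup m ℂ) (a : m → ℝ) :
    reTrace (conjDiagonal U a) = ∑ i, a i := by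
  rw [conjDiagonal_apply, reTrace_mul_comm, ← mul_assoc, Unitary.coe_star_mul_self, one_mul,
    reTrace_apply, trace_diagonal, Complex.re_sum]
  simp only [Complex.ofReal_re]

lemma conjDiagonal_eigenvectorUnitary (hA : A.IsHermitian) :
    conjDiagonal hA.eigenvectorUnitary hA.eigenvalues = A :=
  hA.spectral_theorem.symm

lemma matFun_eq_conjDiagonal (hA : A.IsHermitian) (f : ℝ → ℝ) :
    matFun f A = conjDiagonal hA.eigenvectorUnitary (f ∘ hA.eigenvalues) :=
  dif_pos hA

lemma exists_conjDiagonal_eq (hA : 0 ≤ A) :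
    ∃ (U : unitaryGroup m ℂ) (a : m → ℝ), 0 ≤ a ∧ conjDiagonal U a = A :=
  have h := nonneg_iff_posSemidef.mp hA
  ⟨_, _, h.eigenvalues_nonneg, conjDiagonal_eigenvectorUnitary h.isHermitian⟩

lemma conjDiagonal_comp_eq_aeval (U : unitaryGroup m ℂ) {a : m → ℝ} {f : ℝ → ℝ} {q : ℝ[X]}
    (hq : ∀ i, q.eval (a i) = f (a i)) :
    conjDiagonal U (f ∘ a) = aeval (conjDiagonal U a) q := by
  rw [aeval_algHom_apply]
  congr 1
  ext i
  rw [Function.comp_apply, ← hq, aeval_pi_apply₂, coe_aeval_eq_eval]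

lemma matFun_eq_aeval (hA : A.IsHermitian) {f : ℝ → ℝ} {q : ℝ[X]}
    (hq : ∀ i, q.eval (hA.eigenvalues i) = f (hA.eigenvalues i)) :
    matFun f A = aeval A q := by
  rw [matFun_eq_conjDiagonal hA, conjDiagonal_comp_eq_aeval _ hq,
    conjDiagonal_eigenvectorUnitary hA]

lemma exists_polynomial_forall_eval_eq {ι : Type*} [Finite ι] (v : ι → ℝ) (f : ℝ → ℝ) :
    ∃ q : ℝ[X], ∀ i, q.eval (v i) = f (v i) := by
  classical
  exact ⟨Lagrange.interpolate (Set.finite_range v).toFinset id f, fun i =>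
    Lagrange.eval_interpolate_at_node (v := id) f Function.injective_id.injOn (by simp)⟩

lemma matFun_conjDiagonal (f : ℝ → ℝ) (U : unitaryGroup m ℂ) (a : m → ℝ) :
    matFun f (conjDiagonal U a) = conjDiagonal U (f ∘ a) := by
  have hA : (conjDiagonal U a).IsHermitian := isSelfAdjoint_conjDiagonal U a
  obtain ⟨q, hq⟩ := exists_polynomial_forall_eval_eq (Sum.elim a hA.eigenvalues) f
  rw [matFun_eq_aeval hA fun i => hq (.inr i),
    conjDiagonal_comp_eq_aeval U (a := a) fun i => hq (.inl i)]

end Spectral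

section Tensor

open scoped MatrixOrder Matrix
open Matrix

lemma submatrix_mem_Icc {m n : Type*} [DecidableEq m] [DecidableEq n] {T : Matrix m m ℂ}
    (hT : T ∈ Set.Icc 0 1) {e : n → m} (he : Function.Injective e) :
    T.submatrix e e ∈ Set.Icc 0 1 := by
  constructor
  · exact ((nonneg_iff_posSemidef.mp hT.1).submatrix e).nonneg
  · rw [← sub_nonneg, ← submatrix_one e he]
    exact ((nonneg_iff_posSemidef.mp (sub_nonneg.mpr hT.2)).submatrix e).nonneg

variable {κ δ : Type*} [Fintype κ]

lemma conjTranspose_tensorFam (A : κ → Matrix δ δ ℂ) :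
    (tensorFam A)ᴴ = tensorFam fun k => (A k)ᴴ := by
  ext i j
  simp [tensorFam]

lemma tensorFam_smul (c : κ → ℝ) (A : κ → Matrix δ δ ℂ) :
    tensorFam (fun k => c k • A k) = (∏ k, c k) • tensorFam A := by
  ext i j
  simp [tensorFam, Finset.prod_mul_distrib]

lemma tensorFam_diagonal [DecidableEq δ] (a : κ → δ → ℂ) :
    tensorFam (fun k => diagonal (a k)) = diagonal fun i => ∏ k, a k (i k) := by
  ext i j
  simp only [tensorFam, of_apply, diagonal_apply]
  split_ifs with h
  · simp [h]
  · obtain ⟨k, hk⟩ := Function.ne_iff.mp h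
    exact Finset.prod_eq_zero (Finset.mem_univ k) (if_neg hk)

lemma tensorFam_one [DecidableEq δ] : tensorFam (fun _ : κ => (1 : Matrix δ δ ℂ)) = 1 := by
  simpa using tensorFam_diagonal fun (_ : κ) (_ : δ) => (1 : ℂ)

lemma tensorFam_sum [DecidableEq κ] {ι : Type*} [Fintype ι] (A : κ → ι → Matrix δ δ ℂ) :
    tensorFam (fun k => ∑ a, A k a) = ∑ f : κ → ι, tensorFam fun k => A k (f k) := by
  ext i j
  simp only [tensorFam, of_apply, Matrix.sum_apply, Finset.prod_univ_sum, Fintype.piFinset_univ]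

lemma tensorFam_mul [DecidableEq κ] [Fintype δ] (A B : κ → Matrix δ δ ℂ) :
    tensorFam A * tensorFam B = tensorFam fun k => A k * B k := by
  ext i j
  simp only [tensorFam, mul_apply, of_apply, Finset.prod_univ_sum, Fintype.piFinset_univ,
    Finset.prod_mul_distrib]

lemma tensorFam_nonneg [Finite δ] {A : κ → Matrix δ δ ℂ} (hA : ∀ k, 0 ≤ A k) :
    0 ≤ tensorFam A := by
  classical
  cases nonempty_fintype δ
  choose C hC using fun k => CStarAlgebra.nonneg_iff_eq_star_mul_self.mp (hA k)
  have : tensorFam A = star (tensorFam C) * tensorFam C := by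
    rw [star_eq_conjTranspose, conjTranspose_tensorFam, tensorFam_mul]
    exact congrArg tensorFam (funext hC)
  exact this ▸ star_mul_self_nonneg _

lemma tensorFam_mono [Finite δ] {A B : κ → Matrix δ δ ℂ} (hA : ∀ k, 0 ≤ A k)
    (hAB : ∀ k, A k ≤ B k) : tensorFam A ≤ tensorFam B := by
  classical
  have split_nonneg : ∀ f : κ → Bool, 0 ≤ tensorFam fun k => cond (f k) (A k) (B k - A k) := by
    refine fun f => tensorFam_nonneg fun k => ?_
    cases f k
    exacts [sub_nonneg.mpr (hAB k), hA k]
  have expand : tensorFam B = ∑ f : κ → Bool, tensorFam fun k => cond (f k) (A k) (B k - A k) := by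
    rw [← tensorFam_sum fun k b => cond b (A k) (B k - A k)]
    simp only [Fintype.sum_bool, cond_true, cond_false, add_sub_cancel]
  calc tensorFam A = tensorFam fun k => cond ((fun _ => true : κ → Bool) k) (A k) (B k - A k) := rfl
    _ ≤ ∑ f : κ → Bool, tensorFam fun k => cond (f k) (A k) (B k - A k) :=
        Finset.single_le_sum (f := fun f : κ → Bool => tensorFam fun k =>
          cond (f k) (A k) (B k - A k)) (fun f _ => split_nonneg f) (Finset.mem_univ _)
    _ = tensorFam B := expand.symm

variable [DecidableEq κ] [Fintype δ]

lemma trace_tensorFam (A : κ → Matrix δ δ ℂ) : (tensorFam A).trace = ∏ k, (A k).trace := by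
  simp only [trace, diag, tensorFam, of_apply, Finset.prod_univ_sum, Fintype.piFinset_univ]

lemma isDensity_tensorFam {A : κ → Matrix δ δ ℂ} (hA : ∀ k, IsDensity (A k)) :
    IsDensity (tensorFam A) :=
  ⟨nonneg_iff_posSemidef.mp (tensorFam_nonneg fun k => (hA k).1.nonneg),
    by simp only [trace_tensorFam, (hA _).2, Finset.prod_const_one]⟩

variable [DecidableEq δ]

/-- The tensor product of a finite family of unitaries. -/
def tensorUnitary (U : κ → unitaryGroup δ ℂ) : unitaryGroup (κ → δ) ℂ :=
  ⟨tensorFam fun k => (U k : Matrix δ δ ℂ), by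
    rw [mem_unitaryGroup_iff, star_eq_conjTranspose, conjTranspose_tensorFam, tensorFam_mul,
      ← tensorFam_one]
    exact congrArg tensorFam (funext fun k => mem_unitaryGroup_iff.mp (U k).2)⟩

lemma tensorFam_conjDiagonal (U : κ → unitaryGroup δ ℂ) (a : κ → δ → ℝ) :
    tensorFam (fun k => conjDiagonal (U k) (a k)) =
      conjDiagonal (tensorUnitary U) fun i => ∏ k, a k (i k) := by
  simp only [conjDiagonal_apply, star_eq_conjTranspose, tensorUnitary, conjTranspose_tensorFam,
    ← tensorFam_mul, tensorFam_diagonal, Complex.ofReal_prod]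

end Tensor

section ClassicalQuantum

open scoped MatrixOrder Matrix
open Matrix

variable {X B : Type*}

/-- The diagonal block at `x` of a matrix on `ℂ^X ⊗ ℂ^B`. -/
abbrev diagBlock (T : Matrix (X × B) (X × B) ℂ) (x : X) : Matrix B B ℂ :=
  T.submatrix (Prod.mk x) (Prod.mk x)

variable [DecidableEq X]

lemma diagBlock_mem_Icc [DecidableEq B] {T : Matrix (X × B) (X × B) ℂ} (hT : T ∈ Set.Icc 0 1)
    (x : X) : diagBlock T x ∈ Set.Icc 0 1 :=
  submatrix_mem_Icc hT (Prod.mk_right_injective x)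

lemma cqState_one_eq_submatrix_blockDiagonal (R : X → Matrix B B ℂ) :
    cqState 1 R = (blockDiagonal R).submatrix (Equiv.prodComm X B) (Equiv.prodComm X B) := by
  ext p q
  simp [cqState, blockDiagonal_apply]

lemma cqState_eq_cqState_one (w : X → ℝ) (R : X → Matrix B B ℂ) :
    cqState w R = cqState 1 fun x => w x • R x := by
  ext p q
  simp [cqState]

variable [Fintype X] [Fintype B]

lemma reTrace_mul_cqState (T : Matrix (X × B) (X × B) ℂ) (w : X → ℝ) (R : X → Matrix B B ℂ) :
    reTrace (T * cqState w R) = ∑ x, w x * reTrace (diagBlock T x * R x) := by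
  simp only [reTrace_apply, trace, diag, mul_apply, cqState, of_apply, submatrix_apply,
    Fintype.sum_prod_type, Complex.re_sum, Finset.mul_sum]
  refine Finset.sum_congr rfl fun x _ => Finset.sum_congr rfl fun b _ => ?_
  rw [Finset.sum_eq_single x (fun y _ hy => by simp [hy]) (by simp)]
  refine Finset.sum_congr rfl fun b' _ => ?_
  rw [if_pos rfl, mul_left_comm, Complex.re_ofReal_mul]

variable [DecidableEq B]

/-- The embedding `R ↦ Σ_x |x⟩⟨x| ⊗ R x` of families of matrices as block diagonal matrices. -/
def cqHom : (X → Matrix B B ℂ) →⋆ₐ[ℝ] Matrix (X × B) (X × B) ℂ where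
  toFun R := cqState 1 R
  map_one' := by
    rw [cqState_one_eq_submatrix_blockDiagonal, blockDiagonal_one, submatrix_one_equiv]
  map_mul' R S := by
    simp only [cqState_one_eq_submatrix_blockDiagonal, blockDiagonal_mul, submatrix_mul_equiv,
      Pi.mul_def]
  map_zero' := by
    rw [cqState_one_eq_submatrix_blockDiagonal, blockDiagonal_zero, submatrix_zero]; rfl
  map_add' R S := by
    simp only [cqState_one_eq_submatrix_blockDiagonal, blockDiagonal_add, submatrix_add]; rfl
  commutes' r := by
    ext p q
    by_cases h : p.1 = q.1 <;>
      simp [cqState, algebraMap_matrix_apply, Pi.algebraMap_apply, Prod.ext_iff, h]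
  map_star' R := by
    simp only [cqState_one_eq_submatrix_blockDiagonal, star_eq_conjTranspose,
      conjTranspose_submatrix, blockDiagonal_conjTranspose, Pi.star_def]

lemma cqState_eq_cqHom (w : X → ℝ) (R : X → Matrix B B ℂ) :
    cqState w R = cqHom fun x => w x • R x :=
  cqState_eq_cqState_one w R

lemma diagBlock_cqHom (F : X → Matrix B B ℂ) (x : X) : diagBlock (cqHom F) x = F x := by
  ext i j
  simp [cqHom, cqState]

lemma cqHom_mem_Icc {F : X → Matrix B B ℂ} (hF : ∀ x, F x ∈ Set.Icc 0 1) :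
    cqHom F ∈ Set.Icc 0 1 :=
  ⟨map_nonneg cqHom fun x => (hF x).1,
    (OrderHomClass.mono cqHom fun x => (hF x).2).trans_eq (map_one _)⟩

lemma matFun_cqHom (f : ℝ → ℝ) {R : X → Matrix B B ℂ} (hR : ∀ x, (R x).IsHermitian) :
    matFun f (cqHom R) = cqHom fun x => matFun f (R x) := by
  have hcq : (cqHom R).IsHermitian := IsSelfAdjoint.map (funext hR) cqHom
  obtain ⟨q, hq⟩ := exists_polynomial_forall_eval_eq
    (Sum.elim hcq.eigenvalues fun p : X × B => (hR p.1).eigenvalues p.2) f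
  rw [matFun_eq_aeval hcq fun i => hq (.inl i), Polynomial.aeval_algHom_apply,
    Polynomial.aeval_pi_apply]
  exact congrArg cqHom (funext fun x => (matFun_eq_aeval (hR x) fun i => hq (.inr (x, i))).symm)

end ClassicalQuantum

section Entropy

open scoped MatrixOrder Matrix
open Matrix

variable {m : Type*} [Fintype m] [DecidableEq m]

lemma exists_mem_stdSimplex_conjDiagonal_eq {τ : Matrix m m ℂ} (hτ : IsDensity τ) :
    ∃ (U : unitaryGroup m ℂ), ∃ a ∈ stdSimplex ℝ m, conjDiagonal U a = τ := by
  obtain ⟨U, a, ha, rfl⟩ := exists_conjDiagonal_eq hτ.1.nonneg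
  refine ⟨U, a, ⟨ha, ?_⟩, rfl⟩
  rw [← reTrace_conjDiagonal U, reTrace_apply, hτ.2, Complex.one_re]

/-- The von Neumann entropy `-Tr τ log τ`, measured in nats. -/
def entropy (τ : Matrix m m ℂ) : ℝ := reTrace (matFun Real.negMulLog τ)

lemma entropy_conjDiagonal (U : unitaryGroup m ℂ) (a : m → ℝ) :
    entropy (conjDiagonal U a) = ∑ i, Real.negMulLog (a i) := by
  rw [entropy, matFun_conjDiagonal, reTrace_conjDiagonal]
  rfl

lemma entropy_nonneg {τ : Matrix m m ℂ} (hτ : IsDensity τ) : 0 ≤ entropy τ := by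
  obtain ⟨U, a, ha, rfl⟩ := exists_mem_stdSimplex_conjDiagonal_eq hτ
  rw [entropy_conjDiagonal]
  exact Finset.sum_nonneg fun i _ =>
    Real.negMulLog_nonneg (ha.1 i)
      (ha.2 ▸ Finset.single_le_sum (fun j _ => ha.1 j) (Finset.mem_univ i))

lemma negMulLog_le_one {x : ℝ} (hx : 0 ≤ x) : Real.negMulLog x ≤ 1 := by
  rcases hx.eq_or_lt with rfl | hx
  · simp
  · have := mul_le_mul_of_nonneg_left (Real.one_sub_inv_le_log_of_pos hx) hx.le
    rw [mul_sub, mul_inv_cancel₀ hx.ne'] at this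
    rw [Real.negMulLog]
    linarith

lemma entropy_le_card {τ : Matrix m m ℂ} (hτ : 0 ≤ τ) : entropy τ ≤ Fintype.card m := by
  obtain ⟨U, a, ha, rfl⟩ := exists_conjDiagonal_eq hτ
  rw [entropy_conjDiagonal]
  simpa using Finset.sum_le_card_nsmul Finset.univ _ 1 fun i _ => negMulLog_le_one (ha i)

lemma reTrace_mul_mlog2_self {τ : Matrix m m ℂ} (hτ : 0 ≤ τ) :
    reTrace (τ * mlog2 τ) * Real.log 2 = -entropy τ := by
  obtain ⟨U, a, ha, rfl⟩ := exists_conjDiagonal_eq hτ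
  rw [mlog2, matFun_conjDiagonal, ← map_mul, reTrace_conjDiagonal, entropy_conjDiagonal,
    Finset.sum_mul, ← Finset.sum_neg_distrib]
  refine Finset.sum_congr rfl fun i _ => ?_
  have hlog : Real.log 2 ≠ 0 := (Real.log_pos one_lt_two).ne'
  rw [Pi.mul_apply, Function.comp_apply, Real.negMulLog]
  split_ifs with h
  · simp [le_antisymm h (ha i)]
  · rw [mul_assoc, Real.logb, div_mul_cancel₀ _ hlog, neg_mul, neg_neg]

/-- On the support of `σ`, `log (c σ) = log c + log σ`; the domination of `τ` by a multiple of `σ`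
puts `τ` inside that support. -/
lemma reTrace_mul_mlog2_smul {τ σ : Matrix m m ℂ} (hτ : 0 ≤ τ) {b c : ℝ} (hb : 0 < b) (hc : 0 < c)
    (h : b • τ ≤ σ) :
    reTrace (τ * mlog2 (c • σ)) = Real.logb 2 c * reTrace τ + reTrace (τ * mlog2 σ) := by
  obtain ⟨V, s, hs, rfl⟩ := exists_conjDiagonal_eq ((smul_nonneg hb.le hτ).trans h)
  set N := {i | s i = 0}
  have kernel_nonneg : 0 ≤ conjDiagonal V (N.indicator 1) :=
    map_nonneg _ (Set.indicator_nonneg fun _ _ => zero_le_one)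
  have kernel_zero : reTrace (τ * conjDiagonal V (N.indicator 1)) = 0 := by
    have mul_eq_zero : s * N.indicator 1 = 0 := by
      ext i
      by_cases hi : s i = 0 <;> simp [N, hi]
    have upper := reTrace_mul_le_mul_right h kernel_nonneg
    rw [← map_mul, mul_eq_zero, map_zero, map_zero, smul_mul_assoc, map_smul, smul_eq_mul] at upper
    exact le_antisymm (nonpos_of_mul_nonpos_right upper hb) (reTrace_mul_nonneg hτ kernel_nonneg)
  have log_eq : (fun u => if u ≤ 0 then 0 else Real.logb 2 u) ∘ (c • s) =
      Real.logb 2 c • (1 - N.indicator 1) +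
        (fun u => if u ≤ 0 then 0 else Real.logb 2 u) ∘ s := by
    ext i
    obtain hi | hi : s i = 0 ∨ 0 < s i := (hs i).eq_or_lt.imp_left Eq.symm
    · simp [N, hi]
    · simp [N, hi.ne', hi.not_ge, (mul_pos hc hi).not_ge, Real.logb_mul hc.ne' hi.ne']
  rw [mlog2, mlog2, ← map_smul, matFun_conjDiagonal, matFun_conjDiagonal, log_eq, map_add,
    map_smul, map_sub, map_one, mul_add, mul_smul_comm, mul_sub, mul_one, map_add, map_smul,
    map_sub, kernel_zero, sub_zero, smul_eq_mul]

variable {X B : Type*} [Fintype X] [DecidableEq X] [Fintype B] [DecidableEq B]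

lemma mlog2_cqState (w : X → ℝ) {R : X → Matrix B B ℂ} (hR : ∀ x, (R x).IsHermitian) :
    mlog2 (cqState w R) = cqHom fun x => mlog2 (w x • R x) := by
  rw [cqState_eq_cqHom, mlog2, matFun_cqHom]
  · rfl
  · exact fun x => (IsSelfAdjoint.all (w x)).smul (hR x)

lemma relEnt_cqState {P : X → ℝ} (hP : ∀ x, 0 ≤ P x) {τ : X → Matrix B B ℂ} (hτ : ∀ x, 0 ≤ τ x)
    {σ : Matrix B B ℂ} (hσ : σ.IsHermitian) (h : ∀ x, P x • τ x ≤ σ) :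
    relEnt (cqState P τ) (cqState P fun _ => σ) = ∑ x, P x * relEnt (τ x) σ := by
  rw [relEnt, ← reTrace_apply, reTrace_mul_comm, reTrace_mul_cqState,
    mlog2_cqState P fun x => (hτ x).isSelfAdjoint, mlog2_cqState P fun _ => hσ, ← map_sub]
  refine Finset.sum_congr rfl fun x _ => ?_
  rw [diagBlock_cqHom, reTrace_mul_comm, relEnt, ← reTrace_apply]
  rcases (hP x).eq_or_lt with hx | hx
  · rw [← hx, zero_mul, zero_mul]
  · rw [Pi.sub_apply, mul_sub, mul_sub, map_sub, map_sub,
      reTrace_mul_mlog2_smul (hτ x) one_pos hx (one_smul ℝ (τ x)).le,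
      reTrace_mul_mlog2_smul (hτ x) hx hx (h x), add_sub_add_left_eq_sub]

/-- The Holevo information, in nats, of the ensemble in which `τ x` occurs with weight `P x`. -/
def holevo (P : X → ℝ) (τ : X → Matrix B B ℂ) : ℝ :=
  entropy (∑ x, P x • τ x) - ∑ x, P x * entropy (τ x)

lemma relEnt_cqState_mul_log_two {P : X → ℝ} (hP : ∀ x, 0 ≤ P x) {τ : X → Matrix B B ℂ}
    (hτ : ∀ x, 0 ≤ τ x) :
    relEnt (cqState P τ) (cqState P fun _ => ∑ x, P x • τ x) * Real.log 2 = holevo P τ := by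
  have weighted_nonneg : ∀ x, 0 ≤ P x • τ x := fun x => smul_nonneg (hP x) (hτ x)
  set σ := ∑ x, P x • τ x with hσ
  have σ_nonneg : 0 ≤ σ := Finset.sum_nonneg fun x _ => weighted_nonneg x
  have dominated : ∀ x, P x • τ x ≤ σ := fun x =>
    Finset.single_le_sum (f := fun x => P x • τ x) (fun y _ => weighted_nonneg y)
      (Finset.mem_univ x)
  have cross : ∑ x, P x * reTrace (τ x * mlog2 σ) = reTrace (σ * mlog2 σ) := by
    conv_rhs => rw [hσ, Finset.sum_mul, map_sum]
    simp only [smul_mul_assoc, map_smul, smul_eq_mul, ← hσ]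
  calc relEnt (cqState P τ) (cqState P fun _ => σ) * Real.log 2
      = (∑ x, P x * reTrace (τ x * mlog2 (τ x)) - reTrace (σ * mlog2 σ)) * Real.log 2 := by
        rw [relEnt_cqState hP hτ σ_nonneg.isSelfAdjoint dominated, ← cross,
          ← Finset.sum_sub_distrib]
        simp only [relEnt, ← reTrace_apply, mul_sub, map_sub]
    _ = ∑ x, P x * (reTrace (τ x * mlog2 (τ x)) * Real.log 2) -
          reTrace (σ * mlog2 σ) * Real.log 2 := by
        rw [sub_mul, Finset.sum_mul]
        simp only [mul_assoc]
    _ = holevo P τ := by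
        simp only [reTrace_mul_mlog2_self (hτ _), reTrace_mul_mlog2_self σ_nonneg, holevo, ← hσ,
          mul_neg, Finset.sum_neg_distrib]
        ring

end Entropy

section OneShot

open scoped MatrixOrder Matrix
open Matrix

lemma conj_mem_Icc {A : Type*} [Ring A] [StarRing A] [PartialOrder A] [StarOrderedRing A] {p t : A}
    (hp : IsStarProjection p) (ht : t ∈ Set.Icc 0 1) : p * t * p ∈ Set.Icc 0 1 := by
  refine ⟨hp.isSelfAdjoint.conjugate_nonneg ht.1, ?_⟩
  calc p * t * p ≤ p * 1 * p := hp.isSelfAdjoint.conjugate_le_conjugate ht.2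
    _ = p := by rw [mul_one, hp.isIdempotentElem.eq]
    _ ≤ 1 := hp.le_one

variable {B : Type*} [Fintype B] [DecidableEq B]

lemma reTrace_one_sub_conjDiagonal_indicator_mul (U : unitaryGroup B ℂ) (S : Set B)
    [DecidablePred (· ∉ S)] (a : B → ℝ) :
    reTrace ((1 - conjDiagonal U (S.indicator 1)) * conjDiagonal U a) = ∑ i with i ∉ S, a i := by
  rw [← map_one (conjDiagonal U), ← map_sub, ← map_mul, reTrace_conjDiagonal, Finset.sum_filter]
  refine Finset.sum_congr rfl fun i _ => ?_
  by_cases hi : i ∈ S <;> simp [hi]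

lemma conjDiagonal_indicator_le_inv_smul (U : unitaryGroup B ℂ) {a : B → ℝ} (ha : 0 ≤ a) {c : ℝ}
    (hc : 0 < c) :
    conjDiagonal U ({i | c ≤ a i}.indicator 1) ≤ c⁻¹ • conjDiagonal U a := by
  rw [← map_smul]
  refine OrderHomClass.mono (conjDiagonal U) fun i => Set.indicator_le' (fun i hi => ?_)
    (fun i _ => smul_nonneg (inv_nonneg.mpr hc.le) (ha i)) i
  rwa [Pi.one_apply, smul_eq_mul, le_inv_mul_iff₀ hc, mul_one]

variable {X : Type*} [Fintype X] {w : X → ℝ} {U : X → unitaryGroup B ℂ} {r : X → B → ℝ}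
  {V : unitaryGroup B ℂ} {s : B → ℝ} {a b : ℝ}

/-- The test projects onto the small eigenvalues of the average state and, inside that subspace,
onto the large eigenvalues of the conditional state. -/
lemma exists_test_of_thresholds (hw : ∀ x, 0 ≤ w x) (hr : ∀ x, 0 ≤ r x)
    (hs : ∑ x, w x • conjDiagonal (U x) (r x) = conjDiagonal V s) (ha : 0 < a) (hb : 0 ≤ b) :
    ∃ F : X → Matrix B B ℂ, (∀ x, F x ∈ Set.Icc 0 1) ∧
      ∑ x, w x * reTrace ((1 - F x) * conjDiagonal (U x) (r x)) ≤
        3 * ∑ i with b < s i, s i + 2 * ∑ x, w x * ∑ i with r x i < a, r x i ∧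
      ∑ x, w x • F x ≤ (b / a) • 1 := by
  set A := conjDiagonal V ({i | s i ≤ b}.indicator 1)
  set C : X → Matrix B B ℂ := fun x => conjDiagonal (U x) ({i | a ≤ r x i}.indicator 1)
  have hA : IsStarProjection A := isStarProjection_conjDiagonal_indicator _ _
  have hC : ∀ x, C x ∈ Set.Icc 0 1 := fun x =>
    have := isStarProjection_conjDiagonal_indicator (U x) {i | a ≤ r x i}
    ⟨this.nonneg, this.le_one⟩
  refine ⟨fun x => A * C x * A, fun x => conj_mem_Icc hA (hC x), ?_, ?_⟩
  · calc ∑ x, w x * reTrace ((1 - A * C x * A) * conjDiagonal (U x) (r x))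
        ≤ ∑ x, w x * reTrace ((3 • (1 - A) + 2 • (1 - C x)) * conjDiagonal (U x) (r x)) :=
          Finset.sum_le_sum fun x _ => mul_le_mul_of_nonneg_left (reTrace_mul_le_mul_right
            (one_sub_conj_le hA (hC x)) (map_nonneg _ (hr x))) (hw x)
      _ = 3 * reTrace ((1 - A) * conjDiagonal V s) +
            2 * ∑ x, w x * reTrace ((1 - C x) * conjDiagonal (U x) (r x)) := by
          rw [← hs, ← sum_mul_reTrace_mul, Finset.mul_sum, Finset.mul_sum, ← Finset.sum_add_distrib]
          refine Finset.sum_congr rfl fun x _ => ?_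
          simp only [add_mul, smul_mul_assoc, map_add, map_nsmul]
          simp only [nsmul_eq_mul, Nat.cast_ofNat]
          ring
      _ = _ := by
          simp only [A, C, reTrace_one_sub_conjDiagonal_indicator_mul, Set.mem_ofPred_eq, not_le]
  · calc ∑ x, w x • (A * C x * A)
        ≤ ∑ x, w x • (A * (a⁻¹ • conjDiagonal (U x) (r x)) * A) :=
          Finset.sum_le_sum fun x _ => smul_le_smul_of_nonneg_left
            (hA.isSelfAdjoint.conjugate_le_conjugate
              (conjDiagonal_indicator_le_inv_smul (U x) (hr x) ha)) (hw x)
      _ = a⁻¹ • (A * conjDiagonal V s * A) := by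
          rw [← hs, Finset.mul_sum, Finset.sum_mul, Finset.smul_sum]
          refine Finset.sum_congr rfl fun x _ => ?_
          simp only [mul_smul_comm, smul_mul_assoc, smul_comm (w x)]
      _ ≤ a⁻¹ • (b • 1) := by
          refine smul_le_smul_of_nonneg_left ?_ (inv_nonneg.mpr ha.le)
          rw [← map_one (conjDiagonal V), ← map_smul, ← map_mul, ← map_mul]
          refine OrderHomClass.mono (conjDiagonal V) fun i => ?_
          by_cases hi : s i ≤ b <;> simp [hi, hb]
      _ = (b / a) • 1 := by rw [smul_smul, div_eq_inv_mul]

lemma conjDiagonal_le_smul_one_add (U : unitaryGroup B ℂ) (q : B → ℝ) (ha : 0 ≤ a) :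
    conjDiagonal U q ≤ a • 1 + conjDiagonal U ({i | a < q i}.indicator q) := by
  rw [← map_one (conjDiagonal U), ← map_smul, ← map_add]
  refine OrderHomClass.mono (conjDiagonal U) fun i => ?_
  by_cases hi : a < q i
  · simp [hi, ha]
  · simpa [hi] using not_lt.mp hi

lemma reTrace_mul_conjDiagonal_le (U : unitaryGroup B ℂ) {q : B → ℝ} (hq : 0 ≤ q)
    {E : Matrix B B ℂ} (hE : E ∈ Set.Icc 0 1) (ha : 0 ≤ a) :
    reTrace (E * conjDiagonal U q) ≤ a * reTrace E + ∑ i with a < q i, q i := by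
  have tail_nonneg : 0 ≤ conjDiagonal U ({i | a < q i}.indicator q) :=
    map_nonneg _ (Set.indicator_nonneg fun i _ => hq i)
  calc reTrace (E * conjDiagonal U q)
      ≤ reTrace (E * (a • 1 + conjDiagonal U ({i | a < q i}.indicator q))) :=
        reTrace_mul_le_mul_left hE.1 (conjDiagonal_le_smul_one_add U q ha)
    _ = a * reTrace E + reTrace (E * conjDiagonal U ({i | a < q i}.indicator q)) := by
        rw [mul_add, mul_smul_comm, mul_one, map_add, map_smul, smul_eq_mul]
    _ ≤ a * reTrace E + reTrace (1 * conjDiagonal U ({i | a < q i}.indicator q)) :=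
        add_le_add_right (reTrace_mul_le_mul_right hE.2 tail_nonneg) _
    _ = _ := by
        rw [one_mul, reTrace_conjDiagonal, Finset.sum_filter]
        simp only [Set.indicator_apply, Set.mem_ofPred_eq]

lemma reTrace_conj_indicator_le (V : unitaryGroup B ℂ) (hs : 0 ≤ s) (hb : 0 < b)
    {F : Matrix B B ℂ} (hF : 0 ≤ F) :
    reTrace (conjDiagonal V ({i | b ≤ s i}.indicator 1) * F *
      conjDiagonal V ({i | b ≤ s i}.indicator 1)) ≤ b⁻¹ * reTrace (F * conjDiagonal V s) := by
  rw [reTrace_mul_comm, ← mul_assoc,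
    (isStarProjection_conjDiagonal_indicator V _).isIdempotentElem.eq, reTrace_mul_comm,
    ← smul_eq_mul b⁻¹, ← map_smul, ← mul_smul_comm]
  exact reTrace_mul_le_mul_left hF (conjDiagonal_indicator_le_inv_smul V hs hb)

lemma sum_mul_reTrace_le_of_thresholds (hw : ∀ x, 0 ≤ w x) (hr : ∀ x, 0 ≤ r x) (hs₀ : 0 ≤ s)
    (hs : ∑ x, w x • conjDiagonal (U x) (r x) = conjDiagonal V s) (ha : 0 ≤ a) (hb : 0 < b)
    {F : X → Matrix B B ℂ} (hF : ∀ x, F x ∈ Set.Icc 0 1) :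
    ∑ x, w x * reTrace (F x * conjDiagonal (U x) (r x)) ≤
      2 * (a / b) * ∑ x, w x * reTrace (F x * conjDiagonal V s) +
        2 * ∑ x, w x * ∑ i with a < r x i, r x i + 2 * ∑ i with s i < b, s i := by
  set A := conjDiagonal V ({i | b ≤ s i}.indicator 1) with hA_def
  have hA : IsStarProjection A := isStarProjection_conjDiagonal_indicator _ _
  have pointwise : ∀ x, reTrace (F x * conjDiagonal (U x) (r x)) ≤
      2 * (a / b) * reTrace (F x * conjDiagonal V s) + 2 * ∑ i with a < r x i, r x i +
        2 * reTrace ((1 - A) * conjDiagonal (U x) (r x)) := fun x => by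
    have pinched := reTrace_mul_le_mul_right (le_two_nsmul_conj_add hA (hF x))
      (map_nonneg (conjDiagonal (U x)) (hr x))
    simp only [add_mul, smul_mul_assoc, map_add, map_nsmul] at pinched
    simp only [nsmul_eq_mul, Nat.cast_ofNat] at pinched
    have upper := reTrace_mul_conjDiagonal_le (U x) (hr x) (conj_mem_Icc hA (hF x)) ha
    have compressed := mul_le_mul_of_nonneg_left
      (reTrace_conj_indicator_le V hs₀ hb (hF x).1) ha
    rw [← hA_def, ← mul_assoc, ← div_eq_mul_inv] at compressed
    linarith
  calc ∑ x, w x * reTrace (F x * conjDiagonal (U x) (r x))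
      ≤ ∑ x, w x * (2 * (a / b) * reTrace (F x * conjDiagonal V s) +
          2 * ∑ i with a < r x i, r x i + 2 * reTrace ((1 - A) * conjDiagonal (U x) (r x))) :=
        Finset.sum_le_sum fun x _ => mul_le_mul_of_nonneg_left (pointwise x) (hw x)
    _ = 2 * (a / b) * ∑ x, w x * reTrace (F x * conjDiagonal V s) +
          2 * ∑ x, w x * ∑ i with a < r x i, r x i +
          2 * reTrace ((1 - A) * conjDiagonal V s) := by
        rw [← hs, ← sum_mul_reTrace_mul]
        simp only [Finset.mul_sum, ← Finset.sum_add_distrib]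
        refine Finset.sum_congr rfl fun x _ => ?_
        simp only [← Finset.mul_sum]
        ring
    _ = _ := by
        simp only [A, reTrace_one_sub_conjDiagonal_indicator_mul, Set.mem_ofPred_eq, not_le]

end OneShot

section IID

open scoped MatrixOrder Matrix
open Matrix

lemma sum_iidProb_smul_tensorFam {X B : Type*} [Fintype X] (P : X → ℝ) (τ : X → Matrix B B ℂ)
    (n : ℕ) :
    ∑ x, iidProb P n x • tensorFam (fun k => τ (x k)) =
      tensorFam fun _ : Fin n => ∑ x, P x • τ x := by
  simp only [tensorFam_sum, tensorFam_smul]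

variable {X B : Type*} [Fintype X] [Fintype B] {P : X → ℝ} {r : X → B → ℝ} {δ : ℝ}

/-- The exponential rate at which i.i.d. spectral log-likelihoods on an alphabet of size `|B|`
concentrate to within `δ`; `16 |B|` bounds the exponential moment `Σ_b p_b log² p_b e^{|log p_b|/2}`
of a distribution `p` on `B`. -/
abbrev tailRate (B : Type*) [Fintype B] (δ : ℝ) : ℝ :=
  δ ^ 2 / (4 * (16 * Fintype.card B))

lemma tailRate_pos [Nonempty B] (hδ : 0 < δ) : 0 < tailRate B δ := by
  have := Fintype.card_pos (α := B)
  positivity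

lemma tailRate_le [Nonempty B] (hδ : 0 < δ) (hδ₁ : δ ≤ 1) : tailRate B δ ≤ δ := by
  have card_ge : (1 : ℝ) ≤ Fintype.card B := by exact_mod_cast Fintype.card_pos (α := B)
  rw [tailRate, div_le_iff₀ (by positivity)]
  nlinarith

lemma sum_mul_log_sq_mul_exp_le {q : B → ℝ} (hq : q ∈ stdSimplex ℝ B) :
    ∑ i, q i * (Real.log (q i) ^ 2 * Real.exp (|Real.log (q i)| / 2)) ≤ 16 * Fintype.card B := by
  have hq₁ : ∀ i, q i ≤ 1 := fun i =>
    hq.2 ▸ Finset.single_le_sum (fun j _ => hq.1 j) (Finset.mem_univ i)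
  simpa [mul_comm] using Finset.sum_le_card_nsmul Finset.univ _ 16 fun i _ =>
    mul_log_sq_mul_exp_le (hq.1 i) (hq₁ i)

lemma le_sixteen_mul_card [Nonempty B] (hδ : δ ≤ 1) : δ ≤ 16 * Fintype.card B := by
  have : (1 : ℝ) ≤ Fintype.card B := mod_cast Fintype.card_pos
  linarith

lemma sum_joint_mul (P : X → ℝ) (r g : X → B → ℝ) :
    ∑ a : X × B, P a.1 * r a.1 a.2 * g a.1 a.2 = ∑ x, P x * ∑ i, r x i * g x i := by
  simp only [Fintype.sum_prod_type, mul_assoc, Finset.mul_sum]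

lemma joint_mem_stdSimplex (hP : P ∈ stdSimplex ℝ X) (hr : ∀ x, r x ∈ stdSimplex ℝ B) :
    (fun a : X × B => P a.1 * r a.1 a.2) ∈ stdSimplex ℝ (X × B) :=
  ⟨fun a => mul_nonneg (hP.1 _) ((hr _).1 _), by
    simpa [(hr _).2, hP.2] using sum_joint_mul P r fun _ _ => 1⟩

lemma sum_joint_mul_log_sq_mul_exp_le (hP : P ∈ stdSimplex ℝ X) (hr : ∀ x, r x ∈ stdSimplex ℝ B) :
    ∑ a : X × B, P a.1 * r a.1 a.2 *
        (Real.log (r a.1 a.2) ^ 2 * Real.exp (|Real.log (r a.1 a.2)| / 2)) ≤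
      16 * Fintype.card B := by
  rw [sum_joint_mul P r fun x i => Real.log (r x i) ^ 2 * Real.exp (|Real.log (r x i)| / 2)]
  refine (Finset.sum_le_sum fun x _ => mul_le_mul_of_nonneg_left
    (sum_mul_log_sq_mul_exp_le (hr x)) (hP.1 x)).trans_eq ?_
  rw [← Finset.sum_mul, hP.2, one_mul]

lemma sum_iidProb_joint_filter (P : X → ℝ) (r : X → B → ℝ) (n : ℕ) (p : ℝ → Prop)
    [DecidablePred p] :
    ∑ v : Fin n → X × B with p (iidProb (fun a => r a.1 a.2) n v),
        iidProb (fun a => P a.1 * r a.1 a.2) n v =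
      ∑ x : Fin n → X, iidProb P n x *
        ∑ i : Fin n → B with p (∏ k, r (x k) (i k)), ∏ k, r (x k) (i k) := by
  simp only [Finset.sum_filter, Finset.mul_sum, ← Fintype.sum_prod_type']
  refine Fintype.sum_equiv (Equiv.arrowProdEquivProdArrow (Fin n) (fun _ => X) fun _ => B) _ _
    fun v => ?_
  by_cases hv : p (∏ k, r (v k).1 (v k).2) <;>
    simp [Equiv.arrowProdEquivProdArrow, iidProb, Finset.prod_mul_distrib, hv]

lemma sum_iidProb_mul_sum_filter_lt_exp (hP : P ∈ stdSimplex ℝ X)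
    (hr : ∀ x, r x ∈ stdSimplex ℝ B) (hδ : 0 < δ) (hδB : δ ≤ 16 * Fintype.card B) (n : ℕ) :
    ∑ x : Fin n → X, iidProb P n x * ∑ i : Fin n → B with
        ∏ k, r (x k) (i k) < Real.exp (n * (∑ x, P x * ∑ i, r x i * Real.log (r x i) - δ)),
        ∏ k, r (x k) (i k) ≤
      Real.exp (-(n * tailRate B δ)) := by
  rw [← sum_iidProb_joint_filter P r n (· < _), ← sum_joint_mul P r fun x i => Real.log (r x i)]
  exact sum_iidProb_filter_lt_exp (joint_mem_stdSimplex hP hr) (fun a => (hr a.1).1 a.2)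
    (fun a => right_ne_zero_of_mul) (sum_joint_mul_log_sq_mul_exp_le hP hr) hδ hδB n

lemma sum_iidProb_mul_sum_filter_exp_lt (hP : P ∈ stdSimplex ℝ X)
    (hr : ∀ x, r x ∈ stdSimplex ℝ B) (hδ : 0 < δ) (hδB : δ ≤ 16 * Fintype.card B) (n : ℕ) :
    ∑ x : Fin n → X, iidProb P n x * ∑ i : Fin n → B with
        Real.exp (n * (∑ x, P x * ∑ i, r x i * Real.log (r x i) + δ)) < ∏ k, r (x k) (i k),
        ∏ k, r (x k) (i k) ≤
      Real.exp (-(n * tailRate B δ)) := by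
  rw [← sum_iidProb_joint_filter P r n (_ < ·), ← sum_joint_mul P r fun x i => Real.log (r x i)]
  exact sum_iidProb_filter_exp_lt (joint_mem_stdSimplex hP hr) (fun a => right_ne_zero_of_mul)
    (sum_joint_mul_log_sq_mul_exp_le hP hr) hδ hδB n

lemma convex_setOf_isDensity : Convex ℝ {τ : Matrix B B ℂ | IsDensity τ} := by
  classical
  intro τ hτ σ hσ a b ha hb hab
  refine ⟨nonneg_iff_posSemidef.mp
    (add_nonneg (smul_nonneg ha hτ.1.nonneg) (smul_nonneg hb hσ.1.nonneg)), ?_⟩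
  rw [trace_add, trace_smul, trace_smul, hτ.2, hσ.2, ← add_smul, hab, one_smul]

variable {τ : X → Matrix B B ℂ}

lemma isDensity_sum_smul (hP : P ∈ stdSimplex ℝ X) (hτ : ∀ x, IsDensity (τ x)) :
    IsDensity (∑ x, P x • τ x) :=
  convex_setOf_isDensity.sum_mem (fun x _ => hP.1 x) hP.2 fun x _ => hτ x

variable [DecidableEq B]

lemma neg_entropy_conjDiagonal (U : unitaryGroup B ℂ) (a : B → ℝ) :
    -entropy (conjDiagonal U a) = ∑ i, a i * Real.log (a i) := by
  simp only [entropy_conjDiagonal, Real.negMulLog, neg_mul, Finset.sum_neg_distrib, neg_neg]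

lemma neg_sum_mul_entropy_conjDiagonal (P : X → ℝ) (U : X → unitaryGroup B ℂ) (r : X → B → ℝ) :
    -∑ x, P x * entropy (conjDiagonal (U x) (r x)) = ∑ x, P x * ∑ i, r x i * Real.log (r x i) := by
  rw [← Finset.sum_neg_distrib]
  exact Finset.sum_congr rfl fun x _ => by rw [← mul_neg, neg_entropy_conjDiagonal]

lemma exists_iid_test [Nonempty B] (hP : P ∈ stdSimplex ℝ X) (hτ : ∀ x, IsDensity (τ x))
    (hδ : 0 < δ) (hδ₁ : δ ≤ 1) (n : ℕ) :
    ∃ F : (Fin n → X) → Matrix (Fin n → B) (Fin n → B) ℂ, (∀ x, F x ∈ Set.Icc 0 1) ∧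
      ∑ x, iidProb P n x * reTrace ((1 - F x) * tensorFam fun k => τ (x k)) ≤
        5 * Real.exp (-(n * tailRate B δ)) ∧
      ∑ x, iidProb P n x • F x ≤ Real.exp (-(n * (holevo P τ - 2 * δ))) • 1 := by
  obtain ⟨V, s, hs, hσ⟩ := exists_mem_stdSimplex_conjDiagonal_eq (isDensity_sum_smul hP hτ)
  choose U r hr hτr using fun x => exists_mem_stdSimplex_conjDiagonal_eq (hτ x)
  obtain rfl : (fun x => conjDiagonal (U x) (r x)) = τ := funext hτr
  have hδB := le_sixteen_mul_card (B := B) hδ₁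
  have average := sum_iidProb_smul_tensorFam P (fun x => conjDiagonal (U x) (r x)) n
  simp only [← hσ, tensorFam_conjDiagonal] at average ⊢
  have prod_nonneg : ∀ x : Fin n → X, 0 ≤ fun i : Fin n → B => ∏ k, r (x k) (i k) :=
    fun x i => Finset.prod_nonneg fun k _ => (hr _).1 _
  obtain ⟨F, hF, first, second⟩ := exists_test_of_thresholds
    (iidProb_mem_stdSimplex hP n).1 prod_nonneg average
    (Real.exp_pos (n * (∑ x, P x * ∑ i, r x i * Real.log (r x i) - δ)))
    (Real.exp_nonneg (n * (∑ i, s i * Real.log (s i) + δ)))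
  refine ⟨F, hF, ?_, second.trans_eq ?_⟩
  · have tail_s := sum_iidProb_filter_exp_lt hs (fun _ h => h) (sum_mul_log_sq_mul_exp_le hs)
      hδ hδB n
    have tail_r := sum_iidProb_mul_sum_filter_lt_exp hP hr hδ hδB n
    linarith
  · rw [← Real.exp_sub, holevo, ← hσ, ← neg_sum_mul_entropy_conjDiagonal P U,
      ← neg_entropy_conjDiagonal V]
    ring_nf

lemma sum_iidProb_mul_reTrace_le [Nonempty B] (hP : P ∈ stdSimplex ℝ X)
    (hτ : ∀ x, IsDensity (τ x)) (hδ : 0 < δ) (hδ₁ : δ ≤ 1) {n : ℕ}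
    {F : (Fin n → X) → Matrix (Fin n → B) (Fin n → B) ℂ} (hF : ∀ x, F x ∈ Set.Icc 0 1) :
    ∑ x, iidProb P n x * reTrace (F x * tensorFam fun k => τ (x k)) ≤
      2 * Real.exp (n * (holevo P τ + 2 * δ)) *
          ∑ x, iidProb P n x * reTrace (F x * tensorFam fun _ => ∑ x, P x • τ x) +
        4 * Real.exp (-(n * tailRate B δ)) := by
  obtain ⟨V, s, hs, hσ⟩ := exists_mem_stdSimplex_conjDiagonal_eq (isDensity_sum_smul hP hτ)
  choose U r hr hτr using fun x => exists_mem_stdSimplex_conjDiagonal_eq (hτ x)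
  obtain rfl : (fun x => conjDiagonal (U x) (r x)) = τ := funext hτr
  have hδB := le_sixteen_mul_card (B := B) hδ₁
  have average := sum_iidProb_smul_tensorFam P (fun x => conjDiagonal (U x) (r x)) n
  simp only [← hσ, tensorFam_conjDiagonal] at average ⊢
  have prod_nonneg : ∀ x : Fin n → X, 0 ≤ fun i : Fin n → B => ∏ k, r (x k) (i k) :=
    fun x i => Finset.prod_nonneg fun k _ => (hr _).1 _
  have bound := sum_mul_reTrace_le_of_thresholds
    (iidProb_mem_stdSimplex hP n).1 prod_nonneg
    (iidProb_mem_stdSimplex hs n).1 average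
    (Real.exp_nonneg (n * (∑ x, P x * ∑ i, r x i * Real.log (r x i) + δ)))
    (Real.exp_pos (n * (∑ i, s i * Real.log (s i) - δ))) hF
  have exponent : Real.exp (n * (∑ x, P x * ∑ i, r x i * Real.log (r x i) + δ)) /
      Real.exp (n * (∑ i, s i * Real.log (s i) - δ)) =
      Real.exp (n * (holevo P (fun x => conjDiagonal (U x) (r x)) + 2 * δ)) := by
    rw [← Real.exp_sub, holevo, ← hσ, ← neg_sum_mul_entropy_conjDiagonal P U,
      ← neg_entropy_conjDiagonal V]
    ring_nf
  have tail_s := sum_iidProb_filter_lt_exp hs hs.1 (fun _ h => h) (sum_mul_log_sq_mul_exp_le hs)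
    hδ hδB n
  have tail_r := sum_iidProb_mul_sum_filter_exp_lt hP hr hδ hδB n
  rw [exponent] at bound
  linarith

end IID

section Types

lemma exp_one_mul_pow_succ_le (N : ℕ) :
    Real.exp 1 * (N : ℝ) ^ (N + 1) ≤ ((N : ℝ) + 1) ^ (N + 1) := by
  have h : (1 - 1 / ((N + 1 : ℕ) : ℝ)) ^ (N + 1) ≤ Real.exp (-1) :=
    Real.one_sub_div_pow_le_exp_neg (by push_cast; linarith [N.cast_nonneg (α := ℝ)])
  have ratio : 1 - 1 / ((N + 1 : ℕ) : ℝ) = N / (N + 1) := by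
    push_cast; field_simp; ring
  rw [ratio, div_pow, div_le_iff₀ (by positivity), Real.exp_neg] at h
  rwa [← le_inv_mul_iff₀ (Real.exp_pos 1)]

lemma exp_mul_factorial_le_of_pos {N : ℕ} (hN : 1 ≤ N) :
    Real.exp N * (N.factorial : ℝ) ≤ Real.exp 1 * N * (N : ℝ) ^ N := by
  induction N, hN using Nat.le_induction with
  | base => simp
  | succ N _ ih =>
    rw [Nat.factorial_succ]
    push_cast
    rw [Real.exp_add]
    calc Real.exp N * Real.exp 1 * ((N + 1) * (N.factorial : ℝ))
        = Real.exp N * N.factorial * (Real.exp 1 * (N + 1)) := by ring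
      _ ≤ Real.exp 1 * N * (N : ℝ) ^ N * (Real.exp 1 * (N + 1)) := by gcongr
      _ = Real.exp 1 * (N + 1) * (Real.exp 1 * (N : ℝ) ^ (N + 1)) := by ring
      _ ≤ Real.exp 1 * (N + 1) * ((N : ℝ) + 1) ^ (N + 1) := by
          gcongr; exact exp_one_mul_pow_succ_le N

lemma exp_mul_factorial_le (N : ℕ) :
    Real.exp N * (N.factorial : ℝ) ≤ Real.exp 1 * (N + 1) * (N : ℝ) ^ N := by
  rcases N.eq_zero_or_pos with rfl | hN
  · simp
  · refine (exp_mul_factorial_le_of_pos hN).trans ?_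
    gcongr
    linarith

lemma pow_self_le_exp_mul_factorial (n : ℕ) : (n : ℝ) ^ n ≤ Real.exp n * n.factorial :=
  (div_le_iff₀ (by positivity)).mp (Real.pow_div_factorial_le_exp (n : ℝ) n.cast_nonneg n)

variable {n : ℕ} {S : Type*} [DecidableEq S]

/-- The number of occurrences of the letter `a` in the word `s`. -/
def letterCount (s : Fin n → S) (a : S) : ℕ :=
  Finset.card {k | s k = a}

/-- The type (empirical distribution) of the word `s`. -/
def empirical (s : Fin n → S) (a : S) : ℝ :=
  letterCount s a / n

lemma letterCount_le (s : Fin n → S) (a : S) : letterCount s a ≤ n :=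
  (Finset.card_le_univ _).trans_eq (Fintype.card_fin n)

variable [Fintype S]

lemma sum_letterCount (s : Fin n → S) : ∑ a, letterCount s a = n := by
  simpa [letterCount] using (Finset.card_eq_sum_card_fiberwise (f := s) (s := Finset.univ)
    (t := Finset.univ) fun _ _ => by simp).symm

lemma empirical_mem_stdSimplex (hn : n ≠ 0) (s : Fin n → S) : empirical s ∈ stdSimplex ℝ S := by
  refine ⟨fun a => by unfold empirical; positivity, ?_⟩
  simp only [empirical, ← Finset.sum_div, ← Nat.cast_sum, sum_letterCount]
  exact div_self (Nat.cast_ne_zero.mpr hn)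

lemma prod_comp_eq_prod_pow_letterCount (s : Fin n → S) (q : S → ℝ) :
    ∏ k, q (s k) = ∏ a, q a ^ letterCount s a := by
  rw [← Finset.prod_fiberwise_of_maps_to (t := Finset.univ) (g := s) fun _ _ => Finset.mem_univ _]
  refine Finset.prod_congr rfl fun a _ => Finset.prod_eq_pow_card fun k hk => ?_
  rw [(Finset.mem_filter.mp hk).2]

lemma iidProb_empirical_comp_perm (s : Fin n → S) (π : Equiv.Perm (Fin n)) :
    iidProb (empirical s) n (s ∘ π) =
      (∏ a, (letterCount s a : ℝ) ^ letterCount s a) / (n : ℝ) ^ n := by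
  calc iidProb (empirical s) n (s ∘ π)
      = ∏ k, (letterCount s (s k) : ℝ) / n := Equiv.prod_comp π fun k => empirical s (s k)
    _ = _ := by
      rw [Finset.prod_div_distrib,
        prod_comp_eq_prod_pow_letterCount s fun a => (letterCount s a : ℝ)]
      simp

lemma card_perm_comp_eq_le (s v : Fin n → S) :
    Finset.card {π : Equiv.Perm (Fin n) | s ∘ π = v} ≤ ∏ a, (letterCount s a).factorial := by
  by_cases h : ∃ π₀ : Equiv.Perm (Fin n), s ∘ π₀ = v
  · obtain ⟨π₀, rfl⟩ := h
    have stabilizer : ∏ a, (letterCount s a).factorial =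
        Finset.card {π : Equiv.Perm (Fin n) | s ∘ π = s} := by
      rw [← Fintype.card_subtype, DomMulAct.stabilizer_card s]
      simp only [Fintype.card_subtype, letterCount]
    rw [stabilizer]
    refine Finset.card_le_card_of_injOn (· * π₀⁻¹) (fun π hπ => ?_)
      fun π _ π' _ h => by simpa using h
    simp only [Finset.coe_filter, Finset.mem_univ, true_and, Set.mem_ofPred_eq] at hπ ⊢
    ext k
    simpa using congrFun hπ (π₀⁻¹ k)
  · rw [Finset.filter_eq_empty_iff.mpr fun {π} _ => not_exists.mp h π]
    simp

lemma prod_factorial_letterCount_mul_exp_le (s : Fin n → S) :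
    (∏ a, ((letterCount s a).factorial : ℝ)) * Real.exp n ≤
      (Real.exp 1 * (n + 1)) ^ Fintype.card S *
        ∏ a, (letterCount s a : ℝ) ^ letterCount s a := by
  have exp_eq : Real.exp n = ∏ a, Real.exp (letterCount s a) := by
    rw [← Real.exp_sum, ← Nat.cast_sum, sum_letterCount]
  rw [exp_eq, ← Finset.card_univ, ← Finset.prod_const, ← Finset.prod_mul_distrib,
    ← Finset.prod_mul_distrib]
  refine Finset.prod_le_prod (fun a _ => by positivity) fun a _ => ?_
  have : (letterCount s a : ℝ) ≤ n := mod_cast letterCount_le s a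
  calc ((letterCount s a).factorial : ℝ) * Real.exp (letterCount s a)
      ≤ Real.exp 1 * (letterCount s a + 1) * (letterCount s a : ℝ) ^ letterCount s a :=
        (mul_comm _ _).trans_le (exp_mul_factorial_le _)
    _ ≤ Real.exp 1 * (n + 1) * (letterCount s a : ℝ) ^ letterCount s a := by gcongr

lemma card_perm_comp_eq_le_mul_iidProb (s v : Fin n → S) :
    (Finset.card {π : Equiv.Perm (Fin n) | s ∘ π = v} : ℝ) ≤
      n.factorial * ((Real.exp 1 * (n + 1)) ^ Fintype.card S * iidProb (empirical s) n v) := by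
  by_cases h : ∃ π₀ : Equiv.Perm (Fin n), s ∘ π₀ = v
  · obtain ⟨π₀, rfl⟩ := h
    have pow_pos : (0 : ℝ) < (n : ℝ) ^ n := mod_cast Nat.pow_self_pos
    have card_le := card_perm_comp_eq_le s (s ∘ π₀)
    rw [iidProb_empirical_comp_perm, ← mul_div_assoc, ← mul_div_assoc, le_div_iff₀ pow_pos]
    calc (Finset.card {π : Equiv.Perm (Fin n) | s ∘ π = s ∘ π₀} : ℝ) * (n : ℝ) ^ n
        ≤ (∏ a, ((letterCount s a).factorial : ℝ)) * (Real.exp n * n.factorial) := by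
          gcongr
          · exact mod_cast card_le
          · exact pow_self_le_exp_mul_factorial n
      _ = n.factorial * ((∏ a, ((letterCount s a).factorial : ℝ)) * Real.exp n) := by ring
      _ ≤ _ :=
          mul_le_mul_of_nonneg_left (prod_factorial_letterCount_mul_exp_le s) (Nat.cast_nonneg _)
  · rw [Finset.filter_eq_empty_iff.mpr fun {π} _ => not_exists.mp h π, Finset.card_empty,
      Nat.cast_zero]
    have : 0 ≤ iidProb (empirical s) n v :=
      Finset.prod_nonneg fun k _ => by unfold empirical; positivity
    positivity

lemma perm_average_le_sum_iidProb_empirical (s : Fin n → S) {f : (Fin n → S) → ℝ}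
    (hf : ∀ v, 0 ≤ f v) :
    (n.factorial : ℝ)⁻¹ * ∑ π : Equiv.Perm (Fin n), f (s ∘ π) ≤
      (Real.exp 1 * (n + 1)) ^ Fintype.card S * ∑ v, iidProb (empirical s) n v * f v := by
  rw [inv_mul_le_iff₀ (by positivity),
    ← Finset.sum_fiberwise_of_maps_to (t := Finset.univ)
      (g := fun π : Equiv.Perm (Fin n) => s ∘ π) fun _ _ => Finset.mem_univ _,
    Finset.mul_sum, Finset.mul_sum]
  refine Finset.sum_le_sum fun v _ => ?_
  have fiber_sum : ∑ π ∈ ({π | s ∘ π = v} : Finset (Equiv.Perm (Fin n))), f (s ∘ π) =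
      Finset.card {π : Equiv.Perm (Fin n) | s ∘ π = v} * f v := by
    rw [← nsmul_eq_mul]
    exact Finset.sum_eq_card_nsmul fun π hπ => by rw [(Finset.mem_filter.mp hπ).2]
  rw [fiber_sum, ← mul_assoc, ← mul_assoc]
  exact mul_le_mul_of_nonneg_right
    ((card_perm_comp_eq_le_mul_iidProb s v).trans_eq (mul_assoc _ _ _).symm) (hf v)

end Types

section Symmetrization

open scoped MatrixOrder Matrix
open Matrix

/-- Matrices on `(ℂ^X)^{⊗n} ⊗ (ℂ^B)^{⊗n}`, the space on which tests of length `n` act. -/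
abbrev TestMatrix (X B : Type*) (n : ℕ) : Type _ :=
  Matrix ((Fin n → X) × (Fin n → B)) ((Fin n → X) × (Fin n → B)) ℂ

lemma trace_submatrix_equiv {m n : Type*} [Fintype m] [Fintype n] (e : n ≃ m) (M : Matrix m m ℂ) :
    (M.submatrix e e).trace = M.trace :=
  e.sum_comp fun i => M i i

lemma IsDensity.submatrix_equiv {m n : Type*} [Fintype m] [Fintype n] {σ : Matrix m m ℂ}
    (hσ : IsDensity σ) (e : n ≃ m) : IsDensity (σ.submatrix e e) :=
  ⟨hσ.1.submatrix e, (trace_submatrix_equiv e σ).trans hσ.2⟩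

lemma reTrace_reindexAlgEquiv_mul {m n : Type*} [Fintype m] [Fintype n] [DecidableEq m]
    [DecidableEq n] (e : m ≃ n) (M : Matrix m m ℂ) (R : Matrix n n ℂ) :
    reTrace (reindexAlgEquiv ℝ ℂ e M * R) = reTrace (M * R.submatrix e e) := by
  rw [reTrace_apply, ← trace_submatrix_equiv e, ← submatrix_mul_equiv _ _ e e e]
  simp [reTrace_apply]

variable {X B : Type*} {n : ℕ}

/-- The simultaneous permutation of the letters of two words. -/
def wordPerm (X B : Type*) (π : Equiv.Perm (Fin n)) :
    Equiv.Perm ((Fin n → X) × (Fin n → B)) :=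
  (π.arrowCongr (.refl X)).prodCongr (π.arrowCongr (.refl B))

lemma tensorFam_submatrix_arrowCongr {S : Type*} (ρ : X → S → Matrix B B ℂ)
    (π : Equiv.Perm (Fin n)) (s : Fin n → S) (x : Fin n → X) :
    (tensorFam fun k => ρ ((x ∘ π.symm) k) (s k)).submatrix (π.arrowCongr (.refl B))
        (π.arrowCongr (.refl B)) =
      tensorFam fun k => ρ (x k) ((s ∘ π) k) := by
  ext i j
  simp only [tensorFam, submatrix_apply, of_apply, ← Equiv.prod_comp π fun k =>
    ρ ((x ∘ π.symm) k) (s k) (π.arrowCongr (.refl B) i k) (π.arrowCongr (.refl B) j k)]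
  simp

variable [DecidableEq X]

lemma cqState_iidProb_submatrix_wordPerm (P : X → ℝ) (π : Equiv.Perm (Fin n))
    (R : (Fin n → X) → Matrix (Fin n → B) (Fin n → B) ℂ) :
    (cqState (iidProb P n) R).submatrix (wordPerm X B π) (wordPerm X B π) =
      cqState (iidProb P n) fun x => (R (x ∘ π.symm)).submatrix (π.arrowCongr (.refl B))
        (π.arrowCongr (.refl B)) := by
  ext ⟨x, i⟩ ⟨y, j⟩
  have word_eq : x ∘ π.symm = y ∘ π.symm ↔ x = y := π.symm.surjective.right_cancellable
  have prob_eq : iidProb P n (x ∘ π.symm) = iidProb P n x :=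
    Equiv.prod_comp π.symm fun k => P (x k)
  change (if x ∘ π.symm = y ∘ π.symm then ((iidProb P n (x ∘ π.symm) : ℝ) : ℂ) else 0) * _ = _
  simp only [word_eq, prob_eq, cqState, submatrix_apply, of_apply]
  rfl

variable [Fintype X] [Fintype B]

/-- The probability of accepting the product state `P^n ⊗ σ`. -/
def typeIIError (P : X → ℝ) (T : TestMatrix X B n) (σ : Matrix (Fin n → B) (Fin n → B) ℂ) : ℝ :=
  reTrace (T * cqState (iidProb P n) fun _ => σ)

variable [DecidableEq B]

/-- The probability of rejecting the state `ρ_{x^n,s^n}` correlated with `x^n ∼ P^n`. -/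
def typeIError {S : Type*} (ρ : X → S → Matrix B B ℂ) (P : X → ℝ)
    (T : TestMatrix X B n) (s : Fin n → S) : ℝ :=
  reTrace ((1 - T) * cqState (iidProb P n) fun x => tensorFam fun k => ρ (x k) (s k))

/-- The average of a test over all simultaneous permutations of the tensor factors. -/
def symmetrization : TestMatrix X B n →ₗ[ℝ] TestMatrix X B n :=
  (n.factorial : ℝ)⁻¹ • ∑ π : Equiv.Perm (Fin n),
    (reindexAlgEquiv ℝ ℂ (wordPerm X B π)).toLinearMap

lemma symmetrization_apply (T : TestMatrix X B n) :
    symmetrization T = ∑ π : Equiv.Perm (Fin n),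
      (n.factorial : ℝ)⁻¹ • reindexAlgEquiv ℝ ℂ (wordPerm X B π) T := by
  simp [symmetrization, Finset.smul_sum]

lemma sum_perm_inv_factorial (n : ℕ) :
    ∑ _π : Equiv.Perm (Fin n), (n.factorial : ℝ)⁻¹ = 1 := by
  rw [Finset.sum_const, Finset.card_univ, Fintype.card_perm, Fintype.card_fin, nsmul_eq_mul]
  exact mul_inv_cancel₀ (by positivity)

lemma symmetrization_one : symmetrization (1 : TestMatrix X B n) = 1 := by
  simp only [symmetrization_apply, map_one, ← Finset.sum_smul, sum_perm_inv_factorial, one_smul]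

lemma symmetrization_mem_Icc {T : TestMatrix X B n} (hT : T ∈ Set.Icc 0 1) :
    symmetrization T ∈ Set.Icc 0 1 := by
  rw [symmetrization_apply]
  exact (convex_Icc 0 1).sum_mem (fun _ _ => by positivity) (sum_perm_inv_factorial n)
    fun π _ => submatrix_mem_Icc hT (wordPerm X B π).symm.injective

lemma reTrace_symmetrization_mul (T R : TestMatrix X B n) :
    reTrace (symmetrization T * R) = (n.factorial : ℝ)⁻¹ * ∑ π : Equiv.Perm (Fin n),
      reTrace (T * R.submatrix (wordPerm X B π) (wordPerm X B π)) := by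
  simp only [symmetrization_apply, Finset.sum_mul, smul_mul_assoc, map_sum, map_smul,
    reTrace_reindexAlgEquiv_mul, smul_eq_mul, Finset.mul_sum]

lemma typeIIError_symmetrization_le {P : X → ℝ} {T : TestMatrix X B n} {b : ℝ}
    (hb : ∀ σ, IsDensity σ → typeIIError P T σ ≤ b) {σ : Matrix (Fin n → B) (Fin n → B) ℂ}
    (hσ : IsDensity σ) : typeIIError P (symmetrization T) σ ≤ b := by
  rw [typeIIError, reTrace_symmetrization_mul, Finset.mul_sum]
  simp only [cqState_iidProb_submatrix_wordPerm]
  refine (Finset.sum_le_sum fun π _ => mul_le_mul_of_nonneg_left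
    (hb _ (hσ.submatrix_equiv (π.arrowCongr (.refl B)))) (by positivity)).trans_eq ?_
  rw [← Finset.sum_mul, sum_perm_inv_factorial, one_mul]

lemma typeIError_symmetrization {S : Type*} (ρ : X → S → Matrix B B ℂ) (P : X → ℝ)
    (T : TestMatrix X B n) (s : Fin n → S) :
    typeIError ρ P (symmetrization T) s =
      (n.factorial : ℝ)⁻¹ * ∑ π : Equiv.Perm (Fin n), typeIError ρ P T (s ∘ π) := by
  have one_sub : 1 - symmetrization T = symmetrization (1 - T) := by
    rw [map_sub, symmetrization_one]
  simp only [typeIError, one_sub, reTrace_symmetrization_mul, cqState_iidProb_submatrix_wordPerm,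
    tensorFam_submatrix_arrowCongr]

end Symmetrization

section Achievability

open scoped MatrixOrder Matrix
open Matrix

lemma IsDensity.reTrace_eq_one {m : Type*} [Fintype m] {σ : Matrix m m ℂ} (hσ : IsDensity σ) :
    reTrace σ = 1 := by
  rw [reTrace_apply, hσ.2, Complex.one_re]

variable {X B : Type*} [DecidableEq X]

lemma cqState_mono [Finite X] [Finite B] {w : X → ℝ} (hw : ∀ x, 0 ≤ w x)
    {R R' : X → Matrix B B ℂ} (h : ∀ x, R x ≤ R' x) : cqState w R ≤ cqState w R' := by
  classical
  cases nonempty_fintype X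
  cases nonempty_fintype B
  simp only [cqState_eq_cqHom]
  exact OrderHomClass.mono cqHom fun x => smul_le_smul_of_nonneg_left (h x) (hw x)

lemma cqState_nonneg [Finite X] [Finite B] {w : X → ℝ} (hw : ∀ x, 0 ≤ w x)
    {R : X → Matrix B B ℂ} (hR : ∀ x, 0 ≤ R x) : 0 ≤ cqState w R := by
  classical
  cases nonempty_fintype X
  cases nonempty_fintype B
  rw [cqState_eq_cqHom]
  exact map_nonneg cqHom fun x => smul_nonneg (hw x) (hR x)

variable [Fintype X] [Fintype B]

lemma reTrace_cqState_eq_one {w : X → ℝ} (hw : w ∈ stdSimplex ℝ X) {R : X → Matrix B B ℂ}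
    (hR : ∀ x, IsDensity (R x)) : reTrace (cqState w R) = 1 := by
  classical
  have := reTrace_mul_cqState 1 w R
  simp only [submatrix_one _ (Prod.mk_right_injective _), one_mul, (hR _).reTrace_eq_one,
    mul_one, hw.2] at this
  exact this

variable {n : ℕ} {P : X → ℝ} {T : TestMatrix X B n}

lemma typeIIError_nonneg (hP : ∀ x, 0 ≤ P x) (hT : 0 ≤ T)
    {σ : Matrix (Fin n → B) (Fin n → B) ℂ} (hσ : IsDensity σ) : 0 ≤ typeIIError P T σ :=
  reTrace_mul_nonneg hT
    (cqState_nonneg (fun _ => Finset.prod_nonneg fun _ _ => hP _) fun _ => hσ.1.nonneg)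

lemma typeIIError_mono (hP : ∀ x, 0 ≤ P x) {T' : TestMatrix X B n} (hT : T ≤ T')
    {σ : Matrix (Fin n → B) (Fin n → B) ℂ} (hσ : IsDensity σ) :
    typeIIError P T σ ≤ typeIIError P T' σ :=
  reTrace_mul_le_mul_right hT
    (cqState_nonneg (fun _ => Finset.prod_nonneg fun _ _ => hP _) fun _ => hσ.1.nonneg)

lemma typeIIError_smul_sum {ι : Type*} [Fintype ι] (P : X → ℝ) (c : ℝ) (F : ι → TestMatrix X B n)
    (σ : Matrix (Fin n → B) (Fin n → B) ℂ) :
    typeIIError P (c • ∑ q, F q) σ = c * ∑ q, typeIIError P (F q) σ := by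
  simp only [typeIIError, smul_mul_assoc, Finset.sum_mul, map_smul, map_sum, smul_eq_mul]

variable [DecidableEq B]

lemma typeIIError_le_one (hP : P ∈ stdSimplex ℝ X) (hT : T ≤ 1)
    {σ : Matrix (Fin n → B) (Fin n → B) ℂ} (hσ : IsDensity σ) : typeIIError P T σ ≤ 1 :=
  (typeIIError_mono hP.1 hT hσ).trans_eq <| by
    rw [typeIIError, one_mul, reTrace_cqState_eq_one (iidProb_mem_stdSimplex hP n) fun _ => hσ]

lemma typeIError_nonneg {S : Type*} {ρ : X → S → Matrix B B ℂ} (hρ : ∀ x s, 0 ≤ ρ x s)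
    (hP : ∀ x, 0 ≤ P x) (hT : T ≤ 1) (s : Fin n → S) : 0 ≤ typeIError ρ P T s :=
  reTrace_mul_nonneg (sub_nonneg.mpr hT)
    (cqState_nonneg (fun _ => Finset.prod_nonneg fun _ _ => hP _)
      fun _ => tensorFam_nonneg fun _ => hρ _ _)

/-- The probability of rejecting the i.i.d. state `(Σ_x P(x) |x⟩⟨x| ⊗ τ_x)^{⊗n}`. -/
def iidTypeIError (τ : X → Matrix B B ℂ) (P : X → ℝ) (T : TestMatrix X B n) : ℝ :=
  reTrace ((1 - T) * cqState (iidProb P n) fun x => tensorFam fun k => τ (x k))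

lemma sum_iidProb_mul_typeIError {S : Type*} [Fintype S] (ρ : X → S → Matrix B B ℂ) (P : X → ℝ)
    (T : TestMatrix X B n) (w : S → ℝ) :
    ∑ s, iidProb w n s * typeIError ρ P T s = iidTypeIError (fun x => ∑ a, w a • ρ x a) P T := by
  simp only [typeIError, iidTypeIError, reTrace_mul_cqState, Finset.mul_sum]
  rw [Finset.sum_comm]
  refine Finset.sum_congr rfl fun x _ => ?_
  simp only [tensorFam_sum, tensorFam_smul]
  rw [← sum_mul_reTrace_mul, Finset.mul_sum]
  exact Finset.sum_congr rfl fun s _ => mul_left_comm _ _ _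

lemma exists_test_iidTypeIError_le [Nonempty B] {τ : X → Matrix B B ℂ} {δ : ℝ}
    (hP : P ∈ stdSimplex ℝ X) (hτ : ∀ x, IsDensity (τ x)) (hδ : 0 < δ) (hδ₁ : δ ≤ 1) (n : ℕ) :
    ∃ G ∈ Set.Icc (0 : TestMatrix X B n) 1,
      iidTypeIError τ P G ≤ 5 * Real.exp (-(n * tailRate B δ)) ∧
      ∀ σ, IsDensity σ → typeIIError P G σ ≤ Real.exp (-(n * (holevo P τ - 2 * δ))) := by
  obtain ⟨F, hF, first, second⟩ := exists_iid_test hP hτ hδ hδ₁ n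
  refine ⟨cqHom F, cqHom_mem_Icc hF, ?_, fun σ hσ => ?_⟩
  · rw [iidTypeIError, ← map_one cqHom, ← map_sub, reTrace_mul_cqState]
    simpa only [diagBlock_cqHom, Pi.sub_apply, Pi.one_apply] using first
  · have bound := reTrace_mul_le_mul_right second hσ.1.nonneg
    simp only [Finset.sum_mul, map_sum, smul_mul_assoc, map_smul, smul_eq_mul, one_mul,
      hσ.reTrace_eq_one, mul_one] at bound
    simpa only [typeIIError, reTrace_mul_cqState, diagBlock_cqHom] using bound

lemma iidTypeIError_le_add {τ : X → Matrix B B ℂ} {G : TestMatrix X B n} {c : ℝ}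
    (hP : P ∈ stdSimplex ℝ X) (hτ : ∀ x, IsDensity (τ x)) (h : 1 - T ≤ (1 - G) + c • 1) :
    iidTypeIError τ P T ≤ iidTypeIError τ P G + c := by
  have nonneg : 0 ≤ cqState (iidProb P n) fun x => tensorFam fun k => τ (x k) :=
    cqState_nonneg (fun _ => Finset.prod_nonneg fun _ _ => hP.1 _)
      fun _ => tensorFam_nonneg fun _ => (hτ _).1.nonneg
  have trace_eq : reTrace (cqState (iidProb P n) fun x => tensorFam fun k => τ (x k)) = 1 :=
    reTrace_cqState_eq_one (iidProb_mem_stdSimplex hP n) fun _ => isDensity_tensorFam fun _ => hτ _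
  simpa only [iidTypeIError, add_mul, smul_mul_assoc, one_mul, map_add, map_smul, smul_eq_mul,
    trace_eq, mul_one] using reTrace_mul_le_mul_right h nonneg

open scoped Matrix.Norms.L2Operator in
lemma exists_test_forall_iidTypeIError_le [Nonempty B] {ι : Type*} [Fintype ι]
    {τ : ι → X → Matrix B B ℂ} {I δ : ℝ} (hP : P ∈ stdSimplex ℝ X)
    (hτ : ∀ q x, IsDensity (τ q x)) (hI : ∀ q, I ≤ holevo P (τ q)) (hδ : 0 < δ) (hδ₁ : δ ≤ 1)
    (n : ℕ) :
    ∃ T ∈ Set.Icc (0 : TestMatrix X B n) 1,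
      (∀ q, iidTypeIError (τ q) P T ≤ 6 * Real.exp (-(n * tailRate B δ))) ∧
      ∀ σ, IsDensity σ → typeIIError P T σ ≤
        Fintype.card ι * Real.exp (n * tailRate B δ) * Real.exp (-(n * (I - 2 * δ))) := by
  choose G hG first second using
    fun q => exists_test_iidTypeIError_le hP (hτ q) hδ hδ₁ n
  obtain ⟨T, hT, hfirst, hsecond⟩ :=
    exists_test_of_forall_mem_Icc hG (Real.exp_pos (-(n * tailRate B δ)))
  refine ⟨T, hT, fun q => ?_, fun σ hσ => ?_⟩
  · linarith [iidTypeIError_le_add hP (hτ q) (hfirst q), first q]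
  · have each : ∀ q, typeIIError P (G q) σ ≤ Real.exp (-(n * (I - 2 * δ))) := fun q =>
      (second q σ hσ).trans <| Real.exp_le_exp.mpr <| by gcongr; exact hI q
    calc typeIIError P T σ
        ≤ Real.exp (n * tailRate B δ) * ∑ q, typeIIError P (G q) σ := by
          simpa only [typeIIError_smul_sum, ← Real.exp_neg, neg_neg]
            using typeIIError_mono hP.1 hsecond hσ
      _ ≤ Real.exp (n * tailRate B δ) * ∑ _q : ι, Real.exp (-(n * (I - 2 * δ))) := by
          gcongr with q; exact each q
      _ = _ := by
          rw [Finset.sum_const, Finset.card_univ, nsmul_eq_mul]; ring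

lemma card_image_empirical_le (n : ℕ) (S : Type*) [Fintype S] [DecidableEq S] :
    (Finset.univ.image (empirical : (Fin n → S) → S → ℝ)).card ≤ (n + 1) ^ Fintype.card S := by
  have subset : Finset.univ.image (empirical : (Fin n → S) → S → ℝ) ⊆
      Finset.univ.image fun (q : S → Fin (n + 1)) a => ((q a : ℕ) : ℝ) / n := by
    refine Finset.image_subset_iff.mpr fun s _ => Finset.mem_image.mpr ?_
    exact ⟨fun a => ⟨letterCount s a, Nat.lt_succ_of_le (letterCount_le s a)⟩, Finset.mem_univ _,
      rfl⟩
  calc _ ≤ _ := Finset.card_le_card subset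
    _ ≤ Fintype.card (S → Fin (n + 1)) := Finset.card_image_le
    _ = (n + 1) ^ Fintype.card S := by rw [Fintype.card_fun, Fintype.card_fin]

variable {S : Type*} [Fintype S]

lemma exists_test_forall_empirical [Nonempty B] [DecidableEq S] {ρ : X → S → Matrix B B ℂ} {I δ : ℝ}
    (hP : P ∈ stdSimplex ℝ X) (hρ : ∀ x a, IsDensity (ρ x a))
    (hI : ∀ w ∈ stdSimplex ℝ S, I ≤ holevo P fun x => ∑ a, w a • ρ x a)
    (hδ : 0 < δ) (hδ₁ : δ ≤ 1) (hn : n ≠ 0) :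
    ∃ T ∈ Set.Icc (0 : TestMatrix X B n) 1,
      (∀ s : Fin n → S, iidTypeIError (fun x => ∑ a, empirical s a • ρ x a) P T ≤
        6 * Real.exp (-(n * tailRate B δ))) ∧
      ∀ σ, IsDensity σ → typeIIError P T σ ≤ (n + 1) ^ Fintype.card S *
        Real.exp (n * tailRate B δ) * Real.exp (-(n * (I - 2 * δ))) := by
  let types : Finset (S → ℝ) := Finset.univ.image (empirical : (Fin n → S) → S → ℝ)
  have types_subset : ∀ q : types, q.1 ∈ stdSimplex ℝ S := by
    rintro ⟨q, hq⟩
    obtain ⟨s, -, rfl⟩ := Finset.mem_image.mp hq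
    exact empirical_mem_stdSimplex hn s
  obtain ⟨T, hT, first, second⟩ := exists_test_forall_iidTypeIError_le hP
    (τ := fun (q : types) x => ∑ a, q.1 a • ρ x a)
    (fun q x => isDensity_sum_smul (types_subset q) (hρ x)) (fun q => hI q.1 (types_subset q))
    hδ hδ₁ n
  refine ⟨T, hT, fun s => first ⟨_, Finset.mem_image_of_mem _ (Finset.mem_univ s)⟩,
    fun σ hσ => (second σ hσ).trans ?_⟩
  rw [Fintype.card_coe]
  gcongr
  exact_mod_cast card_image_empirical_le n S

lemma exists_universal_test [Nonempty B] {ρ : X → S → Matrix B B ℂ} {I δ : ℝ}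
    (hP : P ∈ stdSimplex ℝ X) (hρ : ∀ x a, IsDensity (ρ x a))
    (hI : ∀ w ∈ stdSimplex ℝ S, I ≤ holevo P fun x => ∑ a, w a • ρ x a)
    (hδ : 0 < δ) (hδ₁ : δ ≤ 1) (hn : n ≠ 0) :
    ∃ T ∈ Set.Icc (0 : TestMatrix X B n) 1,
      (∀ s : Fin n → S, typeIError ρ P T s ≤
        (Real.exp 1 * (n + 1)) ^ Fintype.card S * (6 * Real.exp (-(n * tailRate B δ)))) ∧
      ∀ σ, IsDensity σ → typeIIError P T σ ≤ (n + 1) ^ Fintype.card S *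
        Real.exp (n * tailRate B δ) * Real.exp (-(n * (I - 2 * δ))) := by
  classical
  obtain ⟨T, hT, first, second⟩ := exists_test_forall_empirical hP hρ hI hδ hδ₁ hn
  refine ⟨symmetrization T, symmetrization_mem_Icc hT, fun s => ?_,
    fun σ hσ => typeIIError_symmetrization_le second hσ⟩
  have nonneg : ∀ v, 0 ≤ typeIError ρ P T v :=
    typeIError_nonneg (fun x a => (hρ x a).1.nonneg) hP.1 hT.2
  rw [typeIError_symmetrization]
  refine (perm_average_le_sum_iidProb_empirical s nonneg).trans ?_
  rw [sum_iidProb_mul_typeIError]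
  gcongr
  exact first s

end Achievability

section ErrorExponent

open scoped MatrixOrder Matrix
open Matrix

lemma IsDensity.nonempty {m : Type*} [Fintype m] {σ : Matrix m m ℂ} (hσ : IsDensity σ) :
    Nonempty m := by
  by_contra h
  rw [not_nonempty_iff] at h
  simpa [trace] using hσ.2

lemma exists_isDensity (m : Type*) [Fintype m] [Nonempty m] : ∃ σ : Matrix m m ℂ, IsDensity σ := by
  classical
  obtain ⟨i⟩ := ‹Nonempty m›
  refine ⟨diagonal (Pi.single i 1), PosSemidef.diagonal (Pi.single_nonneg.mpr zero_le_one), ?_⟩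
  rw [trace_diagonal, Finset.sum_pi_single', if_pos (Finset.mem_univ i)]

lemma neg_card_le_holevo {X B : Type*} [Fintype X] [Fintype B] [DecidableEq B] {P : X → ℝ}
    (hP : P ∈ stdSimplex ℝ X) {τ : X → Matrix B B ℂ} (hτ : ∀ x, IsDensity (τ x)) :
    -(Fintype.card B : ℝ) ≤ holevo P τ := by
  have average_le : ∑ x, P x * entropy (τ x) ≤ Fintype.card B :=
    calc ∑ x, P x * entropy (τ x) ≤ ∑ x, P x * (Fintype.card B : ℝ) :=
          Finset.sum_le_sum fun x _ =>
            mul_le_mul_of_nonneg_left (entropy_le_card (hτ x).1.nonneg) (hP.1 x)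
      _ = Fintype.card B := by rw [← Finset.sum_mul, hP.2, one_mul]
  rw [holevo]
  linarith [entropy_nonneg (isDensity_sum_smul hP hτ)]

lemma one_sub_iidTypeIError_le {X B : Type*} [Fintype X] [DecidableEq X] [Fintype B]
    [DecidableEq B] [Nonempty B] {P : X → ℝ} (hP : P ∈ stdSimplex ℝ X) {τ : X → Matrix B B ℂ}
    (hτ : ∀ x, IsDensity (τ x)) {δ : ℝ} (hδ : 0 < δ) (hδ₁ : δ ≤ 1) {n : ℕ}
    {T : TestMatrix X B n} (hT : T ∈ Set.Icc 0 1) :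
    1 - iidTypeIError τ P T ≤ 2 * Real.exp (n * (holevo P τ + 2 * δ)) *
        typeIIError P T (tensorFam fun _ => ∑ x, P x • τ x) +
      4 * Real.exp (-(n * tailRate B δ)) := by
  have trace_eq : reTrace (cqState (iidProb P n) fun x => tensorFam fun k => τ (x k)) = 1 :=
    reTrace_cqState_eq_one (iidProb_mem_stdSimplex hP n) fun _ => isDensity_tensorFam fun _ => hτ _
  rw [iidTypeIError, sub_mul, one_mul, map_sub, trace_eq, sub_sub_cancel, typeIIError,
    reTrace_mul_cqState, reTrace_mul_cqState]
  exact sum_iidProb_mul_reTrace_le hP hτ hδ hδ₁ fun x => diagBlock_mem_Icc hT x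

lemma eventually_mul_pow_mul_exp_le (C : ℝ) (N : ℕ) {κ ε : ℝ} (hκ : 0 < κ) (hε : 0 < ε) :
    ∀ᶠ n : ℕ in atTop, C * (n + 1 : ℝ) ^ N * Real.exp (-(n * κ)) ≤ ε := by
  have decay := (tendsto_add_atTop_iff_nat 1).mpr
    (tendsto_pow_const_mul_const_pow_of_abs_lt_one N (r := Real.exp (-κ)) (by
      rwa [abs_of_pos (Real.exp_pos _), Real.exp_lt_one_iff, neg_lt_zero]))
  have scaled := decay.const_mul (C * Real.exp κ)
  rw [mul_zero] at scaled
  filter_upwards [scaled.eventually (ge_mem_nhds hε)] with n hn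
  refine le_of_eq_of_le ?_ hn
  have exp_eq : Real.exp (-(n * κ)) = Real.exp κ * Real.exp (-κ) ^ (n + 1) := by
    rw [← Real.exp_nat_mul, ← Real.exp_add]
    push_cast
    ring_nf
  rw [exp_eq]
  push_cast
  ring

lemma eventually_one_add_half_pow_mul_le {C : ℝ} (hC : 0 ≤ C) (N : ℕ) {κ ε : ℝ} (hκ : 0 < κ)
    (hε : 0 < ε) :
    ∀ᶠ n : ℕ in atTop,
      (1 + κ / 2) ^ n * ((Real.exp 1 * (n + 1)) ^ N * (C * Real.exp (-(n * κ)))) ≤ ε := by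
  filter_upwards [eventually_mul_pow_mul_exp_le (Real.exp 1 ^ N * C) N (half_pos hκ) hε] with n hn
  have pow_le : (1 + κ / 2) ^ n ≤ Real.exp (n * (κ / 2)) := by
    rw [Real.exp_nat_mul, add_comm]
    gcongr
    exact Real.add_one_le_exp _
  calc (1 + κ / 2) ^ n * ((Real.exp 1 * (n + 1)) ^ N * (C * Real.exp (-(n * κ))))
      ≤ Real.exp (n * (κ / 2)) * ((Real.exp 1 * (n + 1)) ^ N * (C * Real.exp (-(n * κ)))) := by
        gcongr
    _ = Real.exp 1 ^ N * C * (n + 1) ^ N * (Real.exp (n * (κ / 2)) * Real.exp (-(n * κ))) := by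
        rw [mul_pow]
        ring
    _ = Real.exp 1 ^ N * C * (n + 1) ^ N * Real.exp (-(n * (κ / 2))) := by
        rw [← Real.exp_add]
        ring_nf
    _ ≤ ε := hn

lemma tendsto_neg_inv_mul_logb_two {β : ℕ → ℝ} {J : ℝ}
    (upper : ∀ c < J * Real.log 2, ∀ᶠ n : ℕ in atTop, β n ≤ Real.exp (-(n * c)))
    (lower : ∀ c > J * Real.log 2, ∀ᶠ n : ℕ in atTop, Real.exp (-(n * c)) ≤ β n) :
    Tendsto (fun n : ℕ => -(1 / (n : ℝ)) * Real.logb 2 (β n)) atTop (nhds J) := by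
  have log_two_pos : 0 < Real.log 2 := Real.log_pos one_lt_two
  have rate_eq : ∀ n : ℕ, -(1 / (n : ℝ)) * Real.logb 2 (β n) =
      -Real.log (β n) / n / Real.log 2 := fun n => by rw [Real.logb]; ring
  refine tendsto_order.mpr ⟨fun a ha => ?_, fun a ha => ?_⟩
  · obtain ⟨c, hac, hcJ⟩ := exists_between ha
    filter_upwards [upper (c * Real.log 2) (by gcongr), lower (J * Real.log 2 + 1) (by linarith),
      eventually_gt_atTop 0] with n hle hge hn
    have log_le := (Real.log_le_iff_le_exp ((Real.exp_pos _).trans_le hge)).mpr hle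
    rw [rate_eq, lt_div_iff₀ log_two_pos]
    refine (mul_lt_mul_of_pos_right hac log_two_pos).trans_le ?_
    rw [le_div_iff₀ (Nat.cast_pos.mpr hn)]
    linarith
  · obtain ⟨c, hJc, hca⟩ := exists_between ha
    filter_upwards [lower (c * Real.log 2) (by gcongr), eventually_gt_atTop 0] with n hge hn
    have le_log := (Real.le_log_iff_exp_le ((Real.exp_pos _).trans_le hge)).mpr hge
    rw [rate_eq, div_lt_iff₀ log_two_pos]
    refine lt_of_le_of_lt ?_ (mul_lt_mul_of_pos_right hca log_two_pos)
    rw [div_le_iff₀ (Nat.cast_pos.mpr hn)]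
    linarith

variable {X S B : Type*}

/-- The averaged output `ρ_{Q,x} = Σ_s Q(s) ρ_{x,s}`. -/
abbrev mixture (ρ : X → S → Matrix B B ℂ) (Q : S →₀ ℝ) (x : X) : Matrix B B ℂ :=
  Q.sum fun s w => w • ρ x s

lemma mixture_eq_sum_support (ρ : X → S → Matrix B B ℂ) (Q : S →₀ ℝ) :
    mixture ρ Q = fun x => ∑ a : Q.support, Q a • ρ x a :=
  funext fun _ => (Finset.sum_coe_sort Q.support _).symm

lemma restrict_support_mem_stdSimplex (Q : FinProb S) :
    (fun a : Q.1.support => Q.1 a) ∈ stdSimplex ℝ Q.1.support :=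
  ⟨fun a => Q.2.1 a, (Finset.sum_coe_sort Q.1.support _).trans Q.2.2⟩

lemma exists_finProb_mixture_eq (ρ : X → S → Matrix B B ℂ) {A : Finset S} {w : A → ℝ}
    (hw : w ∈ stdSimplex ℝ A) :
    ∃ Q : FinProb S, mixture ρ Q.1 = fun x => ∑ a, w a • ρ x a := by
  classical
  let Q : S →₀ ℝ := (Finsupp.equivFunOnFinite.symm w).embDomain (Function.Embedding.subtype _)
  have Q_nonneg : ∀ s, 0 ≤ Q s := by
    intro s
    rw [Finsupp.embDomain_apply]
    split_ifs
    exacts [hw.1 _, le_rfl]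
  refine ⟨⟨Q, Q_nonneg, ?_⟩, funext fun x => ?_⟩
  · rw [Finsupp.sum_embDomain, Finsupp.sum_fintype _ _ fun _ => rfl]
    exact hw.2
  · rw [mixture, Finsupp.sum_embDomain]
    exact Finsupp.sum_fintype _ _ fun _ => zero_smul _ _

variable [Fintype B]

lemma isDensity_mixture {ρ : X → S → Matrix B B ℂ} (hρ : ∀ x s, IsDensity (ρ x s))
    (Q : FinProb S) (x : X) : IsDensity (mixture ρ Q.1 x) := by
  rw [mixture_eq_sum_support]
  exact isDensity_sum_smul (restrict_support_mem_stdSimplex Q) fun a => hρ x a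

variable [DecidableEq B] [Fintype X] [DecidableEq X] {ρ : X → S → Matrix B B ℂ} {P : X → ℝ}
  {n : ℕ} {T : TestMatrix X B n}

lemma iidTypeIError_mixture_le {ε : ℝ} (h : ∀ s, typeIError ρ P T s ≤ ε) (Q : FinProb S) :
    iidTypeIError (mixture ρ Q.1) P T ≤ ε := by
  obtain ⟨nonneg, sum_eq⟩ := iidProb_mem_stdSimplex (restrict_support_mem_stdSimplex Q) n
  rw [mixture_eq_sum_support, ← sum_iidProb_mul_typeIError (fun x (a : Q.1.support) => ρ x a)]
  calc _ ≤ ∑ s : Fin n → Q.1.support, iidProb (fun a : Q.1.support => Q.1 a) n s * ε :=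
        Finset.sum_le_sum fun s _ =>
          mul_le_mul_of_nonneg_left (h fun k => (s k : S)) (nonneg s)
    _ = ε := by rw [← Finset.sum_mul, sum_eq, one_mul]

lemma typeIError_le_pow_mul (hρ : ∀ x s, 0 ≤ ρ x s) (hP : ∀ x, 0 ≤ P x) (hT : T ≤ 1) {c : ℝ}
    {f : S → S} (hf : ∀ s x, ρ x s ≤ c • ρ x (f s)) (s : Fin n → S) :
    typeIError ρ P T s ≤ c ^ n * typeIError ρ P T (f ∘ s) := by
  have tensor_le : ∀ x : Fin n → X, (tensorFam fun k => ρ (x k) (s k)) ≤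
      c ^ n • tensorFam fun k => ρ (x k) (f (s k)) := by
    intro x
    have smul_eq := tensorFam_smul (fun _ : Fin n => c) fun k => ρ (x k) (f (s k))
    rw [Finset.prod_const, Finset.card_univ, Fintype.card_fin] at smul_eq
    rw [← smul_eq]
    exact tensorFam_mono (fun _ => hρ _ _) fun k => hf (s k) (x k)
  have bound := reTrace_mul_le_mul_left (sub_nonneg.mpr hT)
    (cqState_mono (w := iidProb P n) (fun _ => Finset.prod_nonneg fun _ _ => hP _) tensor_le)
  refine bound.trans_eq ?_
  simp only [typeIError, reTrace_mul_cqState, mul_smul_comm, map_smul, smul_eq_mul,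
    Finset.mul_sum]
  exact Finset.sum_congr rfl fun x _ => mul_left_comm _ _ _

end ErrorExponent

section OptimalError

open scoped MatrixOrder Matrix
open Matrix

variable {𝒳 𝒮 : Type*} [Fintype 𝒳] [DecidableEq 𝒳] {d : ℕ}
  {ρ : 𝒳 → 𝒮 → Matrix (Fin d) (Fin d) ℂ} {P : 𝒳 → ℝ} {ε δ : ℝ} {n : ℕ}

lemma mutInfI_mul_log_two (hρ : ∀ x s, IsDensity (ρ x s)) (hP : ∀ x, 0 ≤ P x) (Q : FinProb 𝒮) :
    mutInfI ρ P Q.1 * Real.log 2 = holevo P (mixture ρ Q.1) :=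
  relEnt_cqState_mul_log_two hP fun x => (isDensity_mixture hρ Q x).1.nonneg

lemma bddBelow_range_mutInfI (hρ : ∀ x s, IsDensity (ρ x s)) (hP : P ∈ stdSimplex ℝ 𝒳) :
    BddBelow (Set.range fun Q : FinProb 𝒮 => mutInfI ρ P Q.1) := by
  refine ⟨-(Fintype.card (Fin d) : ℝ) / Real.log 2, ?_⟩
  rintro _ ⟨Q, rfl⟩
  rw [div_le_iff₀ (Real.log_pos one_lt_two), mutInfI_mul_log_two hρ hP.1]
  exact neg_card_le_holevo hP (isDensity_mixture hρ Q)

lemma betaN_le [Nonempty (Fin d)] {b : ℝ} {T : TestMatrix 𝒳 (Fin d) n} (hP : ∀ x, 0 ≤ P x)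
    (hT : T ∈ Set.Icc 0 1) (first : ∀ s, typeIError ρ P T s ≤ ε)
    (second : ∀ σ, IsDensity σ → typeIIError P T σ ≤ b) : betaN ρ P ε n ≤ b := by
  have : Nonempty {σ : Matrix (Fin n → Fin d) (Fin n → Fin d) ℂ // IsDensity σ} :=
    nonempty_subtype.mpr (exists_isDensity _)
  rw [betaN]
  refine le_trans (csInf_le ⟨0, ?_⟩ ⟨T, nonneg_iff_posSemidef.mp hT.1, hT.2, first, rfl⟩)
    (ciSup_le fun σ => second σ.1 σ.2)
  rintro _ ⟨T', hT', -, -, rfl⟩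
  exact Real.iSup_nonneg fun σ => typeIIError_nonneg hP hT'.nonneg σ.2

lemma le_betaN {b : ℝ} (hP : P ∈ stdSimplex ℝ 𝒳) (hε : 0 ≤ ε)
    {σ : Matrix (Fin n → Fin d) (Fin n → Fin d) ℂ} (hσ : IsDensity σ)
    (h : ∀ T ∈ Set.Icc (0 : TestMatrix 𝒳 (Fin d) n) 1, (∀ s, typeIError ρ P T s ≤ ε) →
      b ≤ typeIIError P T σ) : b ≤ betaN ρ P ε n := by
  refine le_csInf ⟨_, 1, PosSemidef.one, ?_, fun s => ?_, rfl⟩ ?_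
  · rw [sub_self]
    exact PosSemidef.zero
  · simpa using hε
  · rintro _ ⟨T, hT₀, hT₁, first, rfl⟩
    have bdd : BddAbove (Set.range fun σ : {σ : Matrix (Fin n → Fin d) (Fin n → Fin d) ℂ //
        IsDensity σ} => typeIIError P T σ.1) :=
      ⟨1, by rintro _ ⟨σ, rfl⟩; exact typeIIError_le_one hP hT₁ σ.2⟩
    exact (h T ⟨hT₀.nonneg, hT₁⟩ first).trans (le_ciSup bdd ⟨σ, hσ⟩)

lemma div_le_betaN [Nonempty (Fin d)] (hρ : ∀ x s, IsDensity (ρ x s)) (hP : P ∈ stdSimplex ℝ 𝒳)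
    (hε : 0 ≤ ε) (Q : FinProb 𝒮) (hδ : 0 < δ) (hδ₁ : δ ≤ 1) (n : ℕ) :
    (1 - ε - 4 * Real.exp (-(n * tailRate (Fin d) δ))) /
        (2 * Real.exp (n * (holevo P (mixture ρ Q.1) + 2 * δ))) ≤ betaN ρ P ε n := by
  have hτ := isDensity_mixture hρ Q
  refine le_betaN hP hε (isDensity_tensorFam fun _ => isDensity_sum_smul hP hτ)
    fun T hT first => ?_
  rw [div_le_iff₀' (by positivity)]
  linarith [one_sub_iidTypeIError_le hP hτ hδ hδ₁ hT, iidTypeIError_mixture_le first Q]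

lemma eventually_exp_le_betaN [Nonempty (Fin d)] (hρ : ∀ x s, IsDensity (ρ x s))
    (hP : P ∈ stdSimplex ℝ 𝒳) (hε : 0 ≤ ε) (hε₁ : ε < 1) (Q : FinProb 𝒮) {c : ℝ}
    (hc : holevo P (mixture ρ Q.1) < c) :
    ∀ᶠ n : ℕ in atTop, Real.exp (-(n * c)) ≤ betaN ρ P ε n := by
  obtain ⟨δ, hδ, hδ_lt⟩ := exists_between
    (lt_min one_pos (show 0 < (c - holevo P (mixture ρ Q.1)) / 3 by linarith))
  have hδ₁ : δ ≤ 1 := (hδ_lt.trans_le (min_le_left _ _)).le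
  have hδc : holevo P (mixture ρ Q.1) + 3 * δ ≤ c := by
    linarith [hδ_lt.trans_le (min_le_right _ _)]
  have half_pos : 0 < (1 - ε) / 2 := by linarith
  filter_upwards [eventually_mul_pow_mul_exp_le 4 0 (tailRate_pos (B := Fin d) hδ) half_pos,
    eventually_mul_pow_mul_exp_le 2 0 hδ half_pos] with n tail_le slack_le
  simp only [pow_zero, mul_one] at tail_le slack_le
  refine le_trans ?_ (div_le_betaN hρ hP hε Q hδ hδ₁ n)
  rw [le_div_iff₀ (by positivity)]
  calc Real.exp (-(n * c)) * (2 * Real.exp (n * (holevo P (mixture ρ Q.1) + 2 * δ)))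
      = 2 * Real.exp (-(n * (c - holevo P (mixture ρ Q.1) - 2 * δ))) := by
        rw [mul_left_comm, ← Real.exp_add]
        ring_nf
    _ ≤ 2 * Real.exp (-(n * δ)) := by gcongr; linarith
    _ ≤ _ := by linarith

lemma betaN_le_of_cover [Nonempty (Fin d)] (hρ : ∀ x s, IsDensity (ρ x s))
    (hP : P ∈ stdSimplex ℝ 𝒳) {I : ℝ} (hI : ∀ Q : FinProb 𝒮, I ≤ holevo P (mixture ρ Q.1))
    (hδ : 0 < δ) (hδ₁ : δ ≤ 1) {A : Finset 𝒮} {c : ℝ} (hc : 0 ≤ c)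
    (hA : ∀ s, ∃ a ∈ A, ∀ x, ρ x s ≤ c • ρ x a) (hn : n ≠ 0)
    (hε : c ^ n * ((Real.exp 1 * (n + 1)) ^ A.card *
      (6 * Real.exp (-(n * tailRate (Fin d) δ)))) ≤ ε) :
    betaN ρ P ε n ≤ (n + 1) ^ A.card * Real.exp (n * tailRate (Fin d) δ) *
      Real.exp (-(n * (I - 2 * δ))) := by
  choose f hfA hf using hA
  obtain ⟨T, hT, first, second⟩ := exists_universal_test (ρ := fun x (a : A) => ρ x a) (I := I)
    hP (fun x a => hρ x a) (fun w hw => by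
      obtain ⟨Q, hQ⟩ := exists_finProb_mixture_eq ρ hw
      exact hQ ▸ hI Q) hδ hδ₁ hn
  rw [Fintype.card_coe] at first second
  refine betaN_le hP.1 hT (fun s => ?_) second
  calc typeIError ρ P T s
      ≤ c ^ n * typeIError ρ P T (f ∘ s) :=
        typeIError_le_pow_mul (fun x a => (hρ x a).1.nonneg) hP.1 hT.2 hf s
    _ ≤ c ^ n * ((Real.exp 1 * (n + 1)) ^ A.card *
          (6 * Real.exp (-(n * tailRate (Fin d) δ)))) :=
        mul_le_mul_of_nonneg_left (first fun k => ⟨f (s k), hfA (s k)⟩) (by positivity)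
    _ ≤ ε := hε

lemma eventually_betaN_le_exp [Nonempty (Fin d)] (hρ : ∀ x s, IsDensity (ρ x s))
    (hAss : AssumptionA ρ) (hP : P ∈ stdSimplex ℝ 𝒳) (hε : 0 < ε) {I c : ℝ}
    (hI : ∀ Q : FinProb 𝒮, I ≤ holevo P (mixture ρ Q.1)) (hc : c < I) :
    ∀ᶠ n : ℕ in atTop, betaN ρ P ε n ≤ Real.exp (-(n * c)) := by
  obtain ⟨δ, hδ, hδ_lt⟩ := exists_between (lt_min one_pos (show 0 < (I - c) / 4 by linarith))
  have hδ₁ : δ ≤ 1 := (hδ_lt.trans_le (min_le_left _ _)).le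
  have hδc : c ≤ I - 4 * δ := by linarith [hδ_lt.trans_le (min_le_right _ _)]
  obtain ⟨κ, hκ⟩ : ∃ κ, κ = tailRate (Fin d) δ := ⟨_, rfl⟩
  have κ_pos : 0 < κ := hκ ▸ tailRate_pos hδ
  have κ_le : κ ≤ δ := hκ ▸ tailRate_le hδ hδ₁
  -- Half of the decay rate `κ` pays for the factor `(1 + κ / 2) ^ n` lost to the finite cover.
  obtain ⟨A, hA⟩ := hAss (κ / 2) (by positivity)
  filter_upwards [eventually_ne_atTop 0,
    eventually_one_add_half_pow_mul_le (C := 6) (by norm_num) A.card κ_pos hε,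
    eventually_mul_pow_mul_exp_le 1 A.card hδ one_pos] with n hn first poly_le
  have poly_le_exp : ((n : ℝ) + 1) ^ A.card ≤ Real.exp (n * δ) := by
    rwa [one_mul, Real.exp_neg, ← div_eq_mul_inv, div_le_one (Real.exp_pos _)] at poly_le
  have upper := betaN_le_of_cover (ε := ε) hρ hP hI hδ hδ₁ (by positivity) hA hn
  rw [← hκ] at upper
  calc betaN ρ P ε n
      ≤ (n + 1) ^ A.card * Real.exp (n * κ) * Real.exp (-(n * (I - 2 * δ))) := upper first
    _ ≤ Real.exp (n * δ) * Real.exp (n * δ) * Real.exp (-(n * (I - 2 * δ))) := by gcongr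
    _ = Real.exp (-(n * (I - 4 * δ))) := by
        rw [← Real.exp_add, ← Real.exp_add]
        ring_nf
    _ ≤ Real.exp (-(n * c)) := by gcongr

lemma nonempty_finProb [Nonempty 𝒮] : Nonempty (FinProb 𝒮) := by
  obtain ⟨s⟩ := ‹Nonempty 𝒮›
  exact ⟨⟨Finsupp.single s 1, Finsupp.single_nonneg.mpr zero_le_one, Finsupp.sum_single_index rfl⟩⟩

end OptimalError

/-- Under Assumption A, for every `ε ∈ (0,1)` and every probability
distribution `P` on `𝒳`, the limit `lim_{n→∞} −(1/n) log₂ β_n(ε)` exists and equals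
`inf_Q I[X;B]_{P,Q}`, the infimum over finitely supported distributions `Q` on `𝒮`. -/
theorem statement0 {𝒳 𝒮 : Type*} [Fintype 𝒳] [DecidableEq 𝒳] [Nonempty 𝒮] {d : ℕ}
    (ρ : 𝒳 → 𝒮 → Matrix (Fin d) (Fin d) ℂ)
    (hρ : ∀ x s, IsDensity (ρ x s))
    (hAss : AssumptionA ρ)
    (P : 𝒳 → ℝ) (hP0 : ∀ x, 0 ≤ P x) (hP1 : ∑ x, P x = 1)
    (ε : ℝ) (hε : ε ∈ Set.Ioo (0 : ℝ) 1) :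
    Tendsto (fun n : ℕ => -(1 / (n : ℝ)) * Real.logb 2 (betaN ρ P ε n)) atTop
      (nhds (⨅ Q : FinProb 𝒮, mutInfI ρ P Q.1)) := by
  have hP : P ∈ stdSimplex ℝ 𝒳 := ⟨hP0, hP1⟩
  obtain ⟨x, -, -⟩ := Finset.exists_ne_zero_of_sum_ne_zero (hP1 ▸ one_ne_zero)
  have : Nonempty (Fin d) := (hρ x (Classical.arbitrary 𝒮)).nonempty
  have : Nonempty (FinProb 𝒮) := nonempty_finProb
  have log_two_pos : 0 < Real.log 2 := Real.log_pos one_lt_two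
  refine tendsto_neg_inv_mul_logb_two (fun c hc => ?_) (fun c hc => ?_)
  · refine eventually_betaN_le_exp hρ hAss hP hε.1 (fun Q => ?_) hc
    rw [← mutInfI_mul_log_two hρ hP0]
    gcongr
    exact ciInf_le (bddBelow_range_mutInfI hρ hP) Q
  · obtain ⟨Q, hQ⟩ := exists_lt_of_ciInf_lt ((lt_div_iff₀ log_two_pos).mpr hc)
    rw [lt_div_iff₀ log_two_pos, mutInfI_mul_log_two hρ hP0] at hQ
    exact eventually_exp_le_betaN hρ hP hε.1.le hε.2 Q hQ
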